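/- In the setting below, for every M > 0 there exists a constant C₀ > 0, depending only on p, c₁, c₂, C_U, u₋, u₊, f and M (and not on T), such that whenever ‖φ(0,·)‖_{L²} + ‖∂ₓφ(0,·)‖_{L²} + sup_{x∈ℝ}|φ(0,x)| ≤ M, then, setting N := sup_{(t,x)∈[0,T]×ℝ} (1+(∂ₓφ(t,x))²)^{1/2}, for all t ∈ [0,T]: ∫_ℝ (1+(∂ₓφ(t,x))²)^{(p−1)/2}·(∂ₓφ(t,x))² dx + ∫₀^t ∫_ℝ (1+(∂ₓφ(τ,x))²)^{p−1}·(∂ₓ²φ(τ,x))² dx dτ ≤ C₀ · N^{1−p}. -/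

import Mathlib

open MeasureTheory Filter Set intervalIntegral

/-- `L²` norm in the space variable. -/
noncomputable def L2norm (g : ℝ → ℝ) : ℝ := (∫ x : ℝ, (g x) ^ 2) ^ ((1 : ℝ) / 2)

/-!
The constants must not see `T`, so everything rests on three bounds that are uniform in time.

* The equation says that `u = U + φ` solves `u_t + f(u)_x = σ(u_x)_x`. The maximum principle keeps
  `u` between `um - M` and `up + M`, so the slopes of `f` along `U` and `U + φ` are bounded.
* Testing the equation with `φ`, convexity of `f` and `∂ₓU > 0` give the flux term a sign. The
  source `∂ₓ(σ(∂ₓU))` is bounded in `L²` by a multiple of `(1 + t)^(-9/8)`, which is integrable in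
  time. This bounds `‖φ‖_{L²}` and the dissipation, hence the space-time integral of
  `(1 + (∂ₓφ)²)^((p-1)/2) (∂ₓφ)²`.
* With `Σ` a primitive of `σ`, the convex energy
  `∫ Σ(∂ₓU + ∂ₓφ) - Σ(∂ₓU) - σ(∂ₓU) ∂ₓφ dx` dominates the weighted square of `∂ₓφ`. Its time
  derivative pairs `∂ₜφ` with `∂ₓ(σ(∂ₓU + ∂ₓφ) - σ(∂ₓU))`. Completing squares leaves the dissipation
  of the second derivative and the error `(f'(u) ∂ₓφ)²`. This is unweighted, and
  `1 ≤ N^(1-p) (1 + (∂ₓφ)²)^((p-1)/2)` reduces it to the second bound; that is the only source of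
  the factor `N^(1-p)`.
-/

/-! ### Increments and Bregman remainders -/

/-- The increment of `g` over the step `v` from `a`. -/
def increment (g : ℝ → ℝ) (a v : ℝ) : ℝ := g (a + v) - g a

/-- The first-order Taylor remainder of `F` at `a` over the step `v`. For `F` a primitive of the
stress or of the flux it is the energy density of a perturbation of size `v` of the state `a`. -/
noncomputable def bregman (F : ℝ → ℝ) (a v : ℝ) : ℝ := increment F a v - deriv F a * v

/-- The primitive of `g` vanishing at `0`. -/
noncomputable def potential (g : ℝ → ℝ) (z : ℝ) : ℝ := ∫ y in (0 : ℝ)..z, g y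

section Increments

variable {g F : ℝ → ℝ} {a v m L : ℝ}

lemma hasDerivAt_potential (hg : Continuous g) (z : ℝ) : HasDerivAt (potential g) (g z) z :=
  (hg.integral_hasStrictDerivAt 0 z).hasDerivAt

lemma differentiable_potential (hg : Continuous g) : Differentiable ℝ (potential g) :=
  fun z => (hasDerivAt_potential hg z).differentiableAt

lemma deriv_potential (hg : Continuous g) : deriv (potential g) = g :=
  funext fun z => (hasDerivAt_potential hg z).deriv

lemma hasDerivAt_increment {a v : ℝ → ℝ} {a' v' x : ℝ} (hg : Differentiable ℝ g)
    (ha : HasDerivAt a a' x) (hv : HasDerivAt v v' x) :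
    HasDerivAt (fun y => increment g (a y) (v y))
      (increment (deriv g) (a x) (v x) * a' + deriv g (a x + v x) * v') x := by
  have h := ((hg (a x + v x)).hasDerivAt.comp x (ha.add hv)).sub ((hg (a x)).hasDerivAt.comp x ha)
  refine h.congr_deriv ?_
  simp only [increment]
  ring

lemma hasDerivAt_bregman {a v : ℝ → ℝ} {a' v' x : ℝ} (hF : Differentiable ℝ F)
    (hF' : Differentiable ℝ (deriv F)) (ha : HasDerivAt a a' x) (hv : HasDerivAt v v' x) :
    HasDerivAt (fun y => bregman F (a y) (v y))
      (increment (deriv F) (a x) (v x) * v' + bregman (deriv F) (a x) (v x) * a') x := by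
  have h := (hasDerivAt_increment hF ha hv).sub (((hF' (a x)).hasDerivAt.comp x ha).mul hv)
  refine h.congr_deriv ?_
  simp only [bregman, increment, Function.comp_apply]
  ring

lemma add_mul_mem_uIcc {θ : ℝ} (hθ : θ ∈ Icc (0 : ℝ) 1) : a + θ * v ∈ uIcc a (a + v) := by
  rw [← segment_eq_uIcc, segment_eq_image']
  exact ⟨θ, hθ, by simp⟩

lemma exists_increment_eq (hg : Differentiable ℝ g) (a v : ℝ) :
    ∃ z ∈ uIcc a (a + v), increment g a v = deriv g z * v := by
  have hd (s : ℝ) : HasDerivAt (fun s => g (a + s * v)) (deriv g (a + s * v) * v) s :=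
    (hg _).hasDerivAt.comp s (by simpa using ((hasDerivAt_id s).mul_const v).const_add a)
  obtain ⟨θ, hθ, h⟩ := exists_hasDerivAt_eq_slope _ _ one_pos
    (fun s _ => (hd s).continuousAt.continuousWithinAt) (fun s _ => hd s)
  refine ⟨a + θ * v, add_mul_mem_uIcc (Ioo_subset_Icc_self hθ), ?_⟩
  simpa [increment] using h.symm

/-- Cauchy's mean value theorem, comparing `s ↦ bregman F a (s v)` with `s ↦ s²`. -/
lemma exists_bregman_eq (hF : Differentiable ℝ F) (hF' : Differentiable ℝ (deriv F)) (a v : ℝ) :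
    ∃ z ∈ uIcc a (a + v), bregman F a v = deriv (deriv F) z / 2 * v ^ 2 := by
  have hd (s : ℝ) :
      HasDerivAt (fun s => bregman F a (s * v)) (increment (deriv F) a (s * v) * v) s := by
    simpa using hasDerivAt_bregman hF hF' (hasDerivAt_const s a) ((hasDerivAt_id s).mul_const v)
  obtain ⟨θ, hθ, h⟩ := exists_ratio_hasDerivAt_eq_ratio_slope _ _ one_pos
    (fun s _ => (hd s).continuousAt.continuousWithinAt) (fun s _ => hd s)
    (fun s => s ^ 2) (fun s => 2 * s) (by fun_prop)
    (fun s _ => by simpa using hasDerivAt_pow 2 s)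
  obtain ⟨z, hz, hincr⟩ := exists_increment_eq hF' a (θ * v)
  refine ⟨z, uIcc_subset_uIcc left_mem_uIcc (add_mul_mem_uIcc (Ioo_subset_Icc_self hθ)) hz, ?_⟩
  rw [hincr] at h
  simp only [bregman, increment] at h ⊢
  refine mul_left_cancel₀ hθ.1.ne' ?_
  norm_num at h
  linarith

lemma abs_increment_le (hg : Differentiable ℝ g) (hL : ∀ z ∈ uIcc a (a + v), |deriv g z| ≤ L) :
    |increment g a v| ≤ L * |v| := by
  obtain ⟨z, hz, h⟩ := exists_increment_eq hg a v
  rw [h, abs_mul]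
  exact mul_le_mul_of_nonneg_right (hL z hz) (abs_nonneg v)

lemma mul_sq_le_mul_increment (hg : Differentiable ℝ g)
    (hm : ∀ z ∈ uIcc a (a + v), m ≤ deriv g z) : m * v ^ 2 ≤ v * increment g a v := by
  obtain ⟨z, hz, h⟩ := exists_increment_eq hg a v
  calc m * v ^ 2 ≤ deriv g z * v ^ 2 := mul_le_mul_of_nonneg_right (hm z hz) (sq_nonneg v)
    _ = v * increment g a v := by rw [h]; ring

lemma mul_sq_le_bregman (hF : Differentiable ℝ F) (hF' : Differentiable ℝ (deriv F))
    (hm : ∀ z ∈ uIcc a (a + v), m ≤ deriv (deriv F) z) : m / 2 * v ^ 2 ≤ bregman F a v := by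
  obtain ⟨z, hz, h⟩ := exists_bregman_eq hF hF' a v
  rw [h]
  gcongr
  exact hm z hz

lemma abs_bregman_le (hF : Differentiable ℝ F) (hF' : Differentiable ℝ (deriv F))
    (hL : ∀ z ∈ uIcc a (a + v), |deriv (deriv F) z| ≤ L) : |bregman F a v| ≤ L / 2 * v ^ 2 := by
  obtain ⟨z, hz, h⟩ := exists_bregman_eq hF hF' a v
  rw [h, abs_mul, abs_div, abs_two, abs_of_nonneg (sq_nonneg v)]
  gcongr
  exact hL z hz

lemma abs_bregman_le_of_deriv_mem_Icc (hg : Differentiable ℝ g)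
    (hL : ∀ z, deriv g z ∈ Icc 0 L) : |bregman g a v| ≤ L * |v| := by
  obtain ⟨z, -, h⟩ := exists_increment_eq hg a v
  rw [bregman, h, ← sub_mul, abs_mul]
  refine mul_le_mul_of_nonneg_right ?_ (abs_nonneg v)
  exact (abs_sub_le_of_nonneg_of_le (hL z).1 (hL z).2 (hL a).1 (hL a).2)

end Increments

/-! ### Square-integrable functions -/

lemma sq_le_of_abs_le {a b C : ℝ} (h : |a| ≤ C * |b|) : a ^ 2 ≤ C ^ 2 * b ^ 2 := by
  simpa only [mul_pow, sq_abs] using pow_le_pow_left₀ (abs_nonneg a) h 2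

lemma memLp_two_of_abs_le {a b : ℝ → ℝ} {C : ℝ} (ha : MemLp a 2) (hb : Continuous b)
    (h : ∀ x, |b x| ≤ C * |a x|) : MemLp b 2 :=
  ha.of_le_mul hb.aestronglyMeasurable (.of_forall h)

lemma integral_sq_le_of_abs_le {a b : ℝ → ℝ} {C : ℝ} (ha : MemLp a 2)
    (h : ∀ x, |b x| ≤ C * |a x|) : ∫ x, b x ^ 2 ≤ C ^ 2 * ∫ x, a x ^ 2 := by
  rw [← MeasureTheory.integral_const_mul]
  exact integral_mono_of_nonneg (.of_forall fun _ => sq_nonneg _)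
    (ha.integrable_sq.const_mul _) (.of_forall fun x => sq_le_of_abs_le (h x))

lemma integral_abs_mul_le_add {a b : ℝ → ℝ} (ha : MemLp a 2) (hb : MemLp b 2) :
    ∫ x, |a x * b x| ≤ (∫ x, a x ^ 2) + ∫ x, b x ^ 2 := by
  rw [← MeasureTheory.integral_add ha.integrable_sq hb.integrable_sq]
  refine integral_mono (ha.integrable_mul hb).abs (ha.integrable_sq.add hb.integrable_sq)
    fun x => ?_
  change |a x * b x| ≤ a x ^ 2 + b x ^ 2
  rw [abs_mul, ← sq_abs (a x), ← sq_abs (b x)]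
  nlinarith [sq_nonneg (|a x| - |b x|), sq_nonneg (|a x|), sq_nonneg (|b x|)]

lemma integral_mul_le_of_integral_sq_le {a b : ℝ → ℝ} {A B : ℝ} (ha : MemLp a 2)
    (hb : MemLp b 2) (hA : 0 ≤ A) (hB : 0 ≤ B) (hA' : ∫ x, a x ^ 2 ≤ A ^ 2)
    (hB' : ∫ x, b x ^ 2 ≤ B ^ 2) : ∫ x, a x * b x ≤ A * B := by
  have holder := integral_mul_norm_le_Lp_mul_Lq (μ := volume) Real.HolderConjugate.two_two
    (f := a) (g := b) (by simpa using ha) (by simpa using hb)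
  simp only [Real.rpow_two, Real.norm_eq_abs, sq_abs, ← Real.sqrt_eq_rpow] at holder
  calc ∫ x, a x * b x ≤ ∫ x, |a x| * |b x| := by
        exact integral_mono (ha.integrable_mul hb) (ha.norm.integrable_mul hb.norm) fun x =>
          (le_abs_self _).trans (abs_mul _ _).le
    _ ≤ A * B := holder.trans (mul_le_mul (Real.sqrt_le_iff.2 ⟨hA, hA'⟩)
        (Real.sqrt_le_iff.2 ⟨hB, hB'⟩) (Real.sqrt_nonneg _) hA)

lemma integral_mul_deriv_eq_neg {a b a' b' : ℝ → ℝ} (ha : MemLp a 2) (hb : MemLp b 2)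
    (ha' : MemLp a' 2) (hb' : MemLp b' 2) (hda : ∀ x, HasDerivAt a (a' x) x)
    (hdb : ∀ x, HasDerivAt b (b' x) x) : ∫ x, a x * b' x = -∫ x, a' x * b x :=
  integral_mul_deriv_eq_deriv_mul_of_integrable (fun x _ => hda x) (fun x _ => hdb x)
    (ha.integrable_mul hb') (ha'.integrable_mul hb) (ha.integrable_mul hb)

/-! ### Families of functions bounded in `L¹` and `L²` -/

/-- A jointly continuous `g` whose slices `g t`, `t ∈ [0, T]`, are integrable and bounded in `L¹`;
this is what differentiating `t ↦ ∫ x, g t x` under the integral sign requires of `∂g/∂t`. -/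
structure BoundedInL1 (T : ℝ) (g : ℝ → ℝ → ℝ) : Prop where
  continuous : Continuous fun q : ℝ × ℝ => g q.1 q.2
  integrable : ∀ t ∈ Icc 0 T, Integrable (g t)
  exists_bound : ∃ B, ∀ t ∈ Icc 0 T, ∫ x, |g t x| ≤ B

/-- A jointly continuous `g` whose slices `g t`, `t ∈ [0, T]`, are bounded in `L²`. Membership in
`L²` is recorded as integrability of the square. -/
structure BoundedInL2 (T : ℝ) (g : ℝ → ℝ → ℝ) : Prop where
  continuous : Continuous fun q : ℝ × ℝ => g q.1 q.2
  integrable_sq : ∀ t ∈ Icc 0 T, Integrable fun x => g t x ^ 2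
  exists_bound : ∃ B, ∀ t ∈ Icc 0 T, ∫ x, g t x ^ 2 ≤ B

section Bounded

variable {T t : ℝ} {a b g g' : ℝ → ℝ → ℝ}

lemma BoundedInL1.uncurry_integrable (hg : BoundedInL1 T g) (ht : t ∈ Icc 0 T) :
    Integrable (Function.uncurry g) ((volume.restrict (Ioc 0 t)).prod volume) := by
  obtain ⟨B, hB⟩ := hg.exists_bound
  have hIoc {s : ℝ} (hs : s ∈ Ioc 0 t) : s ∈ Icc 0 T := ⟨hs.1.le, hs.2.trans ht.2⟩
  have hmeas : AEStronglyMeasurable (Function.uncurry g)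
      ((volume.restrict (Ioc 0 t)).prod volume) := hg.continuous.aestronglyMeasurable
  refine (integrable_prod_iff hmeas).2
    ⟨ae_restrict_of_forall_mem measurableSet_Ioc fun s hs => hg.integrable s (hIoc hs), ?_⟩
  refine (integrable_const B).mono' hmeas.norm.integral_prod_right'
    (ae_restrict_of_forall_mem measurableSet_Ioc fun s hs => ?_)
  rw [Real.norm_of_nonneg (integral_nonneg fun x => norm_nonneg _)]
  exact hB s (hIoc hs)

lemma BoundedInL1.intervalIntegrable_integral (hg : BoundedInL1 T g) (ht : t ∈ Icc 0 T) :
    IntervalIntegrable (fun s => ∫ x, g s x) volume 0 t :=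
  (intervalIntegrable_iff_integrableOn_Ioc_of_le ht.1).2
    (hg.uncurry_integrable ht).integral_prod_left

lemma BoundedInL1.integral_sub_eq_integral_deriv (hg' : BoundedInL1 T g')
    (hg : ∀ t ∈ Icc 0 T, Integrable (g t)) (hd : ∀ s x, HasDerivAt (fun r => g r x) (g' s x) s)
    (ht : t ∈ Icc 0 T) :
    (∫ x, g t x) - ∫ x, g 0 x = ∫ s in (0 : ℝ)..t, ∫ x, g' s x := by
  rw [integral_of_le ht.1, integral_integral_swap (hg'.uncurry_integrable ht),
    ← MeasureTheory.integral_sub (hg t ht) (hg 0 ⟨le_rfl, ht.1.trans ht.2⟩)]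
  refine integral_congr_ae (.of_forall fun x => ?_)
  change g t x - g 0 x = ∫ s in Ioc 0 t, g' s x
  rw [← integral_of_le ht.1]
  refine (integral_eq_sub_of_hasDerivAt (fun s _ => hd s x) ?_).symm
  exact (hg'.continuous.comp (continuous_id.prodMk continuous_const)).intervalIntegrable 0 t

lemma BoundedInL1.add (ha : BoundedInL1 T a) (hb : BoundedInL1 T b) :
    BoundedInL1 T fun t x => a t x + b t x := by
  obtain ⟨A, hA⟩ := ha.exists_bound
  obtain ⟨B, hB⟩ := hb.exists_bound
  refine ⟨ha.continuous.add hb.continuous, fun t ht => (ha.integrable t ht).add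
    (hb.integrable t ht), A + B, fun t ht => ?_⟩
  calc ∫ x, |a t x + b t x| ≤ ∫ x, |a t x| + |b t x| :=
        integral_mono ((ha.integrable t ht).add (hb.integrable t ht)).abs
          ((ha.integrable t ht).abs.add (hb.integrable t ht).abs) fun x => abs_add_le _ _
    _ = (∫ x, |a t x|) + ∫ x, |b t x| :=
        MeasureTheory.integral_add (ha.integrable t ht).abs (hb.integrable t ht).abs
    _ ≤ A + B := add_le_add (hA t ht) (hB t ht)

lemma BoundedInL1.const_mul (c : ℝ) (ha : BoundedInL1 T a) :
    BoundedInL1 T fun t x => c * a t x := by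
  obtain ⟨A, hA⟩ := ha.exists_bound
  refine ⟨continuous_const.mul ha.continuous, fun t ht => (ha.integrable t ht).const_mul c,
    |c| * A, fun t ht => ?_⟩
  simp only [abs_mul, MeasureTheory.integral_const_mul]
  exact mul_le_mul_of_nonneg_left (hA t ht) (abs_nonneg c)

lemma BoundedInL2.slice_continuous (ha : BoundedInL2 T a) (t : ℝ) : Continuous (a t) :=
  ha.continuous.comp (.prodMk_right t)

lemma BoundedInL2.memLp (ha : BoundedInL2 T a) (ht : t ∈ Icc 0 T) : MemLp (a t) 2 :=
  (memLp_two_iff_integrable_sq (ha.slice_continuous t).aestronglyMeasurable).2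
    (ha.integrable_sq t ht)

lemma BoundedInL2.mul (ha : BoundedInL2 T a) (hb : BoundedInL2 T b) :
    BoundedInL1 T fun t x => a t x * b t x := by
  obtain ⟨A, hA⟩ := ha.exists_bound
  obtain ⟨B, hB⟩ := hb.exists_bound
  exact ⟨ha.continuous.mul hb.continuous, fun t ht => (ha.memLp ht).integrable_mul (hb.memLp ht),
    A + B, fun t ht => (integral_abs_mul_le_add (ha.memLp ht) (hb.memLp ht)).trans
      (add_le_add (hA t ht) (hB t ht))⟩

lemma BoundedInL2.of_abs_le {C : ℝ} (ha : BoundedInL2 T a)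
    (hb : Continuous fun q : ℝ × ℝ => b q.1 q.2)
    (h : ∀ t ∈ Icc 0 T, ∀ x, |b t x| ≤ C * |a t x|) : BoundedInL2 T b := by
  obtain ⟨A, hA⟩ := ha.exists_bound
  have hslice (t : ℝ) : Continuous (b t) := hb.comp (.prodMk_right t)
  exact ⟨hb, fun t ht => (memLp_two_of_abs_le (ha.memLp ht) (hslice t) (h t ht)).integrable_sq,
    C ^ 2 * A, fun t ht => (integral_sq_le_of_abs_le (ha.memLp ht) (h t ht)).trans
      (mul_le_mul_of_nonneg_left (hA t ht) (sq_nonneg C))⟩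

lemma BoundedInL2.boundedInL1_of_abs_le {C : ℝ} (ha : BoundedInL2 T a)
    (hb : Continuous fun q : ℝ × ℝ => b q.1 q.2)
    (h : ∀ t ∈ Icc 0 T, ∀ x, |b t x| ≤ C * a t x ^ 2) : BoundedInL1 T b := by
  obtain ⟨A, hA⟩ := (ha.mul ha).const_mul C |>.exists_bound
  have hint (t : ℝ) (ht : t ∈ Icc 0 T) : Integrable fun x => C * a t x ^ 2 :=
    (ha.integrable_sq t ht).const_mul C
  have hb_int (t : ℝ) (ht : t ∈ Icc 0 T) : Integrable (b t) :=
    (hint t ht).mono' (hb.comp (.prodMk_right t)).aestronglyMeasurable (.of_forall (h t ht))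
  refine ⟨hb, hb_int, A, fun t ht => (integral_mono (hb_int t ht).abs (hint t ht).abs
    fun x => (h t ht x).trans (le_abs_self _)).trans ?_⟩
  simpa only [sq] using hA t ht

lemma BoundedInL2.neg (ha : BoundedInL2 T a) : BoundedInL2 T fun t x => -a t x :=
  ha.of_abs_le (C := 1) ha.continuous.neg fun t _ x => by rw [abs_neg, one_mul]

lemma BoundedInL2.add (ha : BoundedInL2 T a) (hb : BoundedInL2 T b) :
    BoundedInL2 T fun t x => a t x + b t x := by
  obtain ⟨A, hA⟩ := ha.exists_bound
  obtain ⟨B, hB⟩ := hb.exists_bound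
  have hint (t : ℝ) (ht : t ∈ Icc 0 T) : Integrable fun x => (a t x + b t x) ^ 2 :=
    ((ha.memLp ht).add (hb.memLp ht)).integrable_sq
  refine ⟨ha.continuous.add hb.continuous, hint, 2 * (A + B), fun t ht => ?_⟩
  calc ∫ x, (a t x + b t x) ^ 2 ≤ ∫ x, 2 * (a t x ^ 2 + b t x ^ 2) :=
        integral_mono (hint t ht)
          (((ha.integrable_sq t ht).add (hb.integrable_sq t ht)).const_mul 2) fun x => add_sq_le
    _ = 2 * ((∫ x, a t x ^ 2) + ∫ x, b t x ^ 2) := by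
        rw [MeasureTheory.integral_const_mul,
          MeasureTheory.integral_add (ha.integrable_sq t ht) (hb.integrable_sq t ht)]
    _ ≤ 2 * (A + B) := by linarith [hA t ht, hB t ht]

lemma BoundedInL2.bdd_mul {C : ℝ} (ha : BoundedInL2 T a)
    (hb : Continuous fun q : ℝ × ℝ => b q.1 q.2) (hC : ∀ t ∈ Icc 0 T, ∀ x, |b t x| ≤ C) :
    BoundedInL2 T fun t x => b t x * a t x :=
  ha.of_abs_le (hb.mul ha.continuous) fun t ht x => by
    rw [abs_mul]
    exact mul_le_mul_of_nonneg_right (hC t ht x) (abs_nonneg _)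

end Bounded

/-! ### Partial derivatives -/

/-- Functions of time and space that are jointly smooth in both variables. -/
def JointlySmooth (g : ℝ → ℝ → ℝ) : Prop := ContDiff ℝ (⊤ : ℕ∞) fun q : ℝ × ℝ => g q.1 q.2

/-- Infinitely differentiable functions of one variable. -/
def IsSmooth (g : ℝ → ℝ) : Prop := ContDiff ℝ (⊤ : ℕ∞) g

/-- The partial derivative `∂ₓ g` in the space variable. -/
noncomputable def spaceDeriv (g : ℝ → ℝ → ℝ) (t x : ℝ) : ℝ := deriv (g t) x

/-- The partial derivative `∂ₜ g` in the time variable. -/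
noncomputable def timeDeriv (g : ℝ → ℝ → ℝ) (t x : ℝ) : ℝ := deriv (fun s => g s x) t

local notation "∂ₓ" => spaceDeriv
local notation "∂ₜ" => timeDeriv

namespace IsSmooth

variable {g : ℝ → ℝ}

lemma continuous (hg : IsSmooth g) : Continuous g := ContDiff.continuous hg

lemma differentiable (hg : IsSmooth g) : Differentiable ℝ g := (contDiff_infty_iff_deriv.1 hg).1

lemma deriv (hg : IsSmooth g) : IsSmooth (deriv g) := (contDiff_infty_iff_deriv.1 hg).2

lemma hasDerivAt (hg : IsSmooth g) (z : ℝ) : HasDerivAt g (_root_.deriv g z) z :=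
  (hg.differentiable z).hasDerivAt

lemma exists_abs_le (hg : IsSmooth g) (a b : ℝ) : ∃ L, ∀ z ∈ Icc a b, |g z| ≤ L :=
  isCompact_Icc.exists_bound_of_continuousOn hg.continuous.continuousOn

end IsSmooth

namespace JointlySmooth

variable {g : ℝ → ℝ → ℝ}

lemma continuous (hg : JointlySmooth g) : Continuous fun q : ℝ × ℝ => g q.1 q.2 :=
  ContDiff.continuous hg

lemma hasDerivAt_fderiv (hg : JointlySmooth g) {X Y : ℝ → ℝ} {X' Y' s : ℝ}
    (hX : HasDerivAt X X' s) (hY : HasDerivAt Y Y' s) :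
    HasDerivAt (fun r => g (X r) (Y r))
      (fderiv ℝ (fun q : ℝ × ℝ => g q.1 q.2) (X s, Y s) (X', Y')) s :=
  HasFDerivAt.comp_hasDerivAt (f := fun r => (X r, Y r)) s
    (ContDiff.differentiable hg (by simp) (X s, Y s)).hasFDerivAt (hX.prodMk hY)

lemma spaceDeriv_eq (hg : JointlySmooth g) (t x : ℝ) :
    ∂ₓ g t x = fderiv ℝ (fun q : ℝ × ℝ => g q.1 q.2) (t, x) (0, 1) :=
  (hg.hasDerivAt_fderiv (hasDerivAt_const x t) (hasDerivAt_id x)).deriv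

lemma timeDeriv_eq (hg : JointlySmooth g) (t x : ℝ) :
    ∂ₜ g t x = fderiv ℝ (fun q : ℝ × ℝ => g q.1 q.2) (t, x) (1, 0) :=
  (hg.hasDerivAt_fderiv (hasDerivAt_id t) (hasDerivAt_const t x)).deriv

lemma hasDerivAt_comp (hg : JointlySmooth g) {X Y : ℝ → ℝ} {X' Y' s : ℝ}
    (hX : HasDerivAt X X' s) (hY : HasDerivAt Y Y' s) :
    HasDerivAt (fun r => g (X r) (Y r)) (X' * ∂ₜ g (X s) (Y s) + Y' * ∂ₓ g (X s) (Y s)) s := by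
  refine (hg.hasDerivAt_fderiv hX hY).congr_deriv ?_
  rw [hg.timeDeriv_eq, hg.spaceDeriv_eq, ← smul_eq_mul, ← smul_eq_mul, ← map_smul, ← map_smul,
    ← map_add]
  simp

lemma hasDerivAt_space (hg : JointlySmooth g) (t x : ℝ) : HasDerivAt (g t) (∂ₓ g t x) x := by
  simpa using hg.hasDerivAt_comp (hasDerivAt_const x t) (hasDerivAt_id x)

lemma hasDerivAt_time (hg : JointlySmooth g) (t x : ℝ) :
    HasDerivAt (fun s => g s x) (∂ₜ g t x) t := by
  simpa using hg.hasDerivAt_comp (hasDerivAt_id t) (hasDerivAt_const t x)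

lemma slice_continuous (hg : JointlySmooth g) (t : ℝ) : Continuous (g t) :=
  hg.continuous.comp (.prodMk_right t)

lemma fderiv_clm_apply (hg : JointlySmooth g) (v : ℝ × ℝ) :
    JointlySmooth fun t x => fderiv ℝ (fun q : ℝ × ℝ => g q.1 q.2) (t, x) v :=
  (ContDiff.fderiv_right hg (m := (⊤ : ℕ∞)) (by simp)).clm_apply contDiff_const

lemma space (hg : JointlySmooth g) : JointlySmooth (∂ₓ g) := by
  simpa only [← hg.spaceDeriv_eq] using hg.fderiv_clm_apply (0, 1)

lemma time (hg : JointlySmooth g) : JointlySmooth (∂ₜ g) := by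
  simpa only [← hg.timeDeriv_eq] using hg.fderiv_clm_apply (1, 0)

lemma fderiv_clm_apply_apply (hg : JointlySmooth g) (q v w : ℝ × ℝ) :
    fderiv ℝ (fun r : ℝ × ℝ => fderiv ℝ (fun q : ℝ × ℝ => g q.1 q.2) (r.1, r.2) v) q w
      = fderiv ℝ (fderiv ℝ fun q : ℝ × ℝ => g q.1 q.2) q w v := by
  have hd := (ContDiff.fderiv_right hg (m := (⊤ : ℕ∞)) (by simp)).differentiable (by simp) q
  exact DFunLike.congr_fun (hd.hasFDerivAt.clm_apply (hasFDerivAt_const v q)).fderiv w |>.trans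
    (by simp)

lemma spaceDeriv_timeDeriv (hg : JointlySmooth g) : ∂ₓ (∂ₜ g) = ∂ₜ (∂ₓ g) := by
  funext t x
  have hsymm : IsSymmSndFDerivAt ℝ (fun q : ℝ × ℝ => g q.1 q.2) (t, x) :=
    (ContDiff.contDiffAt hg).isSymmSndFDerivAt (by
      rw [minSmoothness_of_isRCLikeNormedField]
      exact WithTop.coe_le_coe.2 le_top)
  rw [hg.time.spaceDeriv_eq, hg.space.timeDeriv_eq]
  simp only [hg.spaceDeriv_eq, hg.timeDeriv_eq, hg.fderiv_clm_apply_apply]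
  exact hsymm _ _

end JointlySmooth

/-! ### The maximum principle for degenerate parabolic inequalities -/

/-- A strict local minimum of `g` coming from `g'' > 0` cannot be a global maximum. -/
lemma deriv_deriv_nonpos_of_forall_le {g : ℝ → ℝ} {x : ℝ} (hg : ContinuousAt g x)
    (hmax : ∀ y, g y ≤ g x) : deriv (deriv g) x ≤ 0 := by
  by_contra! hpos
  have hmin : IsLocalMin g x := isLocalMin_of_deriv_deriv_pos hpos
    (IsLocalMax.deriv_eq_zero (.of_forall hmax)) hg
  have hconst : g =ᶠ[nhds x] fun _ => g x := by
    filter_upwards [hmin] with y hy using le_antisymm (hmax y) hy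
  have hzero : deriv (deriv g) x = 0 := by
    rw [hconst.deriv.deriv_eq]
    simp
  exact hpos.ne' hzero

lemma nonneg_of_hasDerivAt_of_forall_le_left {g : ℝ → ℝ} {g' a t : ℝ} (hat : a < t)
    (hg : HasDerivAt g g' t) (hmax : ∀ s ∈ Icc a t, g s ≤ g t) : 0 ≤ g' := by
  have hcone : a - t ∈ posTangentConeAt (Icc a t) t :=
    sub_mem_posTangentConeAt_of_segment_subset
      ((convex_Icc a t).segment_subset (right_mem_Icc.2 hat.le) (left_mem_Icc.2 hat.le))
  have hmaxOn : IsMaxOn g (Icc a t) t := fun s hs => hmax s hs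
  have h := hmaxOn.localize.hasFDerivWithinAt_nonpos
    hg.hasFDerivAt.hasFDerivWithinAt hcone
  simp only [ContinuousLinearMap.toSpanSingleton_apply, smul_eq_mul] at h
  nlinarith

section MaximumPrinciple

variable {W ψ : ℝ → ℝ → ℝ} {a b : ℝ → ℝ → ℝ} {A B K T δ : ℝ}

lemma JointlySmooth.exists_isMaxOn_strip (hψ : JointlySmooth ψ) (hT : 0 ≤ T) (hδ : 0 < δ)
    (hle : ∀ t ∈ Icc 0 T, ∀ x, ψ t x ≤ B - δ * x ^ 2) :
    ∃ t₀ ∈ Icc 0 T, ∃ x₀, ∀ t ∈ Icc 0 T, ∀ x, ψ t x ≤ ψ t₀ x₀ := by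
  have h0T : (0 : ℝ) ∈ Icc 0 T := left_mem_Icc.2 hT
  set R := √((B - ψ 0 0) / δ)
  obtain ⟨⟨t₀, x₀⟩, hmem, hmax⟩ := hψ.continuous.continuousOn.exists_isMaxOn'
    (s := Icc 0 T ×ˢ univ) (isClosed_Icc.prod isClosed_univ) (x₀ := (0, 0)) ⟨h0T, mem_univ _⟩ (by
      refine mem_inf_principal.2 (mem_cocompact.2
        ⟨Icc 0 T ×ˢ Icc (-R) R, isCompact_Icc.prod isCompact_Icc, ?_⟩)
      rintro ⟨t, x⟩ hout ⟨ht, -⟩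
      have hx : R < |x| := by
        by_contra! hx
        exact hout ⟨ht, abs_le.1 hx⟩
      have hsq := mul_lt_mul_of_pos_left (Real.lt_sq_of_sqrt_lt hx) hδ
      rw [mul_div_cancel₀ _ hδ.ne', sq_abs] at hsq
      exact (hle t ht x).trans (by linarith))
  exact ⟨t₀, hmem.1, x₀, fun t ht x =>
    hmax (show (t, x) ∈ Icc 0 T ×ˢ univ from ⟨ht, mem_univ _⟩)⟩

lemma JointlySmooth.derivs_of_isMaxOn_strip (hψ : JointlySmooth ψ) {t₀ x₀ : ℝ}
    (ht₀ : t₀ ∈ Ioc 0 T) (hmax : ∀ t ∈ Icc 0 T, ∀ x, ψ t x ≤ ψ t₀ x₀) :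
    0 ≤ ∂ₜ ψ t₀ x₀ ∧ ∂ₓ ψ t₀ x₀ = 0 ∧ ∂ₓ (∂ₓ ψ) t₀ x₀ ≤ 0 := by
  have hspace := hmax t₀ (Ioc_subset_Icc_self ht₀)
  exact ⟨nonneg_of_hasDerivAt_of_forall_le_left ht₀.1 (hψ.hasDerivAt_time t₀ x₀)
      fun s hs => hmax s ⟨hs.1, hs.2.trans ht₀.2⟩ x₀,
    IsLocalMax.deriv_eq_zero (.of_forall hspace),
    deriv_deriv_nonpos_of_forall_le (hψ.hasDerivAt_space t₀ x₀).continuousAt hspace⟩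

lemma JointlySmooth.le_of_timeDeriv_lt (hψ : JointlySmooth ψ) (hδ : 0 < δ)
    (hle : ∀ t ∈ Icc 0 T, ∀ x, ψ t x ≤ B - δ * x ^ 2) (ha : ∀ t ∈ Icc 0 T, ∀ x, 0 ≤ a t x)
    (hlt : ∀ t ∈ Icc 0 T, ∀ x, ∂ₜ ψ t x < a t x * ∂ₓ (∂ₓ ψ) t x + b t x * ∂ₓ ψ t x)
    (hK : ∀ x, ψ 0 x ≤ K) {t : ℝ} (ht : t ∈ Icc 0 T) (x : ℝ) : ψ t x ≤ K := by
  obtain ⟨t₀, ht₀, x₀, hmax⟩ := hψ.exists_isMaxOn_strip (ht.1.trans ht.2) hδ hle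
  suffices ht₀_zero : t₀ = 0 from (hmax t ht x).trans (ht₀_zero ▸ hK x₀)
  by_contra hne
  obtain ⟨htime, hspace, hsecond⟩ :=
    hψ.derivs_of_isMaxOn_strip ⟨lt_of_le_of_ne ht₀.1 (Ne.symm hne), ht₀.2⟩ hmax
  have h := hlt t₀ ht₀ x₀
  rw [hspace, mul_zero, add_zero] at h
  exact absurd (htime.trans_lt h) (mul_nonpos_of_nonneg_of_nonpos (ha t₀ ht₀ x₀) hsecond).not_gt

/-- A strict supersolution, growing at infinity, of every equation `w_t = a w_xx + b w_x` with
coefficients bounded by `A`; it penalises functions that need not attain their maximum. -/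
noncomputable def penalty (A t x : ℝ) : ℝ := Real.exp ((3 * A + 1) * t) * (1 + x ^ 2)

lemma jointlySmooth_penalty (A : ℝ) : JointlySmooth (penalty A) := by
  unfold JointlySmooth penalty
  fun_prop

lemma timeDeriv_penalty (A t x : ℝ) : ∂ₜ (penalty A) t x = (3 * A + 1) * penalty A t x := by
  have h := (((hasDerivAt_id t).const_mul (3 * A + 1)).exp).mul_const (1 + x ^ 2)
  exact h.deriv.trans (by simp only [penalty, id]; ring)

lemma spaceDeriv_penalty (A : ℝ) :
    ∂ₓ (penalty A) = fun t x => Real.exp ((3 * A + 1) * t) * (2 * x) := by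
  funext t x
  have h := ((hasDerivAt_pow 2 x).const_add 1).const_mul (Real.exp ((3 * A + 1) * t))
  exact h.deriv.trans (by norm_num)

lemma spaceDeriv_spaceDeriv_penalty (A t x : ℝ) :
    ∂ₓ (∂ₓ (penalty A)) t x = Real.exp ((3 * A + 1) * t) * 2 := by
  rw [spaceDeriv_penalty]
  have h := ((hasDerivAt_id x).const_mul 2).const_mul (Real.exp ((3 * A + 1) * t))
  exact h.deriv.trans (by norm_num)

lemma lt_timeDeriv_penalty {α β : ℝ} (hα : α ∈ Icc 0 A) (hβ : |β| ≤ A) (t x : ℝ) :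
    α * ∂ₓ (∂ₓ (penalty A)) t x + β * ∂ₓ (penalty A) t x < ∂ₜ (penalty A) t x := by
  rw [timeDeriv_penalty, spaceDeriv_spaceDeriv_penalty, spaceDeriv_penalty, penalty]
  have hA : 0 ≤ A := (abs_nonneg β).trans hβ
  have hβx : β * (2 * x) ≤ A * (1 + x ^ 2) := by
    calc β * (2 * x) ≤ |β| * (2 * |x|) := by
          simpa only [abs_mul, abs_two] using le_abs_self (β * (2 * x))
      _ ≤ A * (1 + x ^ 2) := by
          gcongr
          rw [← sq_abs x]
          linarith [sq_nonneg (|x| - 1)]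
  calc α * (Real.exp ((3 * A + 1) * t) * 2) + β * (Real.exp ((3 * A + 1) * t) * (2 * x))
      = Real.exp ((3 * A + 1) * t) * (α * 2 + β * (2 * x)) := by ring
    _ < Real.exp ((3 * A + 1) * t) * ((3 * A + 1) * (1 + x ^ 2)) := by
        gcongr
        nlinarith [hα.2, mul_nonneg hA (sq_nonneg x), sq_nonneg x]
    _ = (3 * A + 1) * (Real.exp ((3 * A + 1) * t) * (1 + x ^ 2)) := by ring

lemma JointlySmooth.le_add_penalty (hW : JointlySmooth W) (hδ : 0 < δ)
    (hB : ∀ t ∈ Icc 0 T, ∀ x, W t x ≤ B)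
    (ha : ∀ t ∈ Icc 0 T, ∀ x, a t x ∈ Icc 0 A) (hb : ∀ t ∈ Icc 0 T, ∀ x, |b t x| ≤ A)
    (hle : ∀ t ∈ Icc 0 T, ∀ x, ∂ₜ W t x ≤ a t x * ∂ₓ (∂ₓ W) t x + b t x * ∂ₓ W t x)
    (hK : ∀ x, W 0 x ≤ K) {t : ℝ} (ht : t ∈ Icc 0 T) (x : ℝ) :
    W t x ≤ K + δ * penalty A t x := by
  have hP := jointlySmooth_penalty A
  have hA : 0 ≤ A := (abs_nonneg _).trans (hb t ht x)
  have hsq_le {s y : ℝ} (hs : 0 ≤ s) : y ^ 2 ≤ penalty A s y := by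
    have hexp : 1 ≤ Real.exp ((3 * A + 1) * s) := Real.one_le_exp (by positivity)
    unfold penalty
    nlinarith [sq_nonneg y]
  have hx : ∂ₓ (fun s y => W s y - δ * penalty A s y)
      = fun s y => ∂ₓ W s y - δ * ∂ₓ (penalty A) s y := by
    funext s y
    exact ((hW.hasDerivAt_space s y).sub ((hP.hasDerivAt_space s y).const_mul δ)).deriv
  suffices h : W t x - δ * penalty A t x ≤ K by linarith
  refine JointlySmooth.le_of_timeDeriv_lt (a := a) (b := b) (B := B)
    (ψ := fun s y => W s y - δ * penalty A s y) (hW.sub (contDiff_const.mul hP)) hδ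
    (fun s hs y => ?_) (fun s hs y => (ha s hs y).1) (fun s hs y => ?_) (fun y => ?_) ht x
  · linarith [hB s hs y, mul_le_mul_of_nonneg_left (hsq_le (y := y) hs.1) hδ.le]
  · rw [hx, show ∂ₜ (fun s y => W s y - δ * penalty A s y) s y = _ from
        ((hW.hasDerivAt_time s y).sub ((hP.hasDerivAt_time s y).const_mul δ)).deriv,
      show ∂ₓ (fun s y => ∂ₓ W s y - δ * ∂ₓ (penalty A) s y) s y = _ from
        ((hW.space.hasDerivAt_space s y).sub ((hP.space.hasDerivAt_space s y).const_mul δ)).deriv]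
    linarith [hle s hs y,
      mul_lt_mul_of_pos_left (lt_timeDeriv_penalty (ha s hs y) (hb s hs y) s y) hδ]
  · linarith [hK y, mul_nonneg hδ.le ((sq_nonneg y).trans (hsq_le le_rfl))]

theorem JointlySmooth.le_of_timeDeriv_le (hW : JointlySmooth W)
    (hB : ∀ t ∈ Icc 0 T, ∀ x, W t x ≤ B)
    (ha : ∀ t ∈ Icc 0 T, ∀ x, a t x ∈ Icc 0 A) (hb : ∀ t ∈ Icc 0 T, ∀ x, |b t x| ≤ A)
    (hle : ∀ t ∈ Icc 0 T, ∀ x, ∂ₜ W t x ≤ a t x * ∂ₓ (∂ₓ W) t x + b t x * ∂ₓ W t x)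
    (hK : ∀ x, W 0 x ≤ K) {t : ℝ} (ht : t ∈ Icc 0 T) (x : ℝ) : W t x ≤ K := by
  have hpenalty : 0 < penalty A t x := by
    unfold penalty
    positivity
  refine le_of_forall_pos_le_add fun ε hε => ?_
  simpa only [div_mul_cancel₀ _ hpenalty.ne'] using
    hW.le_add_penalty (div_pos hε hpenalty) hB ha hb hle hK ht x

end MaximumPrinciple

/-! ### Smooth rarefaction waves -/

lemma integrable_of_hasDerivAt_of_nonneg {g g' : ℝ → ℝ} {a b : ℝ}
    (hg : ∀ x, HasDerivAt g (g' x) x) (hg' : Continuous g') (hnonneg : ∀ x, 0 ≤ g' x)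
    (hmem : ∀ x, g x ∈ Icc a b) : Integrable g' := by
  refine integrable_of_intervalIntegral_norm_bounded (l := atTop) (a := fun n : ℝ => -n)
    (b := fun n => n) (b - a) (fun n => hg'.integrableOn_Icc.mono_set Ioc_subset_Icc_self)
    tendsto_neg_atTop_atBot tendsto_id (.of_forall fun n => ?_)
  simp only [Real.norm_of_nonneg (hnonneg _)]
  rw [integral_eq_sub_of_hasDerivAt (fun x _ => hg x) (hg'.intervalIntegrable _ _)]
  linarith [(hmem n).2, (hmem (-n)).1]

/-- A smooth increasing solution `U` of `∂ₜU + ∂ₓ(f(U)) = 0` between the states `um` and `up`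
whose derivatives decay at the rates of a smoothed rarefaction wave. -/
structure IsSmoothRarefaction (f : ℝ → ℝ) (um up CU : ℝ) (U : ℝ → ℝ → ℝ) : Prop where
  smooth : JointlySmooth U
  equation : ∀ t, 0 ≤ t → ∀ x, ∂ₜ U t x + deriv (fun y => f (U t y)) x = 0
  range : ∀ t, 0 ≤ t → ∀ x, um < U t x ∧ U t x < up
  spaceDeriv_pos : ∀ t, 0 ≤ t → ∀ x, 0 < ∂ₓ U t x
  spaceDeriv_le : ∀ t, 0 ≤ t → ∀ x, ∂ₓ U t x ≤ CU * (1 + t)⁻¹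
  secondDeriv_le : ∀ t, 0 ≤ t → ∀ x,
    L2norm (∂ₓ (∂ₓ U) t) + |∂ₓ (∂ₓ U) t x| ≤ CU * (1 + t) ^ (-(9 : ℝ) / 8)
  mixedDeriv_le : ∀ t, 0 ≤ t → ∀ x, L2norm (∂ₜ (∂ₓ U) t) + |∂ₜ (∂ₓ U) t x| ≤ CU * (1 + t)⁻¹

lemma L2norm_nonneg (g : ℝ → ℝ) : 0 ≤ L2norm g :=
  Real.rpow_nonneg (integral_nonneg fun _ => sq_nonneg _) _

lemma integral_sq_le_of_L2norm_le {g : ℝ → ℝ} {A : ℝ} (h : L2norm g ≤ A) :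
    ∫ x, g x ^ 2 ≤ A ^ 2 := by
  have hsq : L2norm g ^ 2 = ∫ x, g x ^ 2 := by
    rw [L2norm, ← Real.sqrt_eq_rpow, Real.sq_sqrt (integral_nonneg fun _ => sq_nonneg _)]
  exact hsq ▸ pow_le_pow_left₀ (L2norm_nonneg g) h 2

lemma inv_one_add_le_one {t : ℝ} (ht : 0 ≤ t) : (1 + t)⁻¹ ≤ 1 :=
  inv_le_one_of_one_le₀ (by linarith)

lemma rpow_le_inv_one_add {t : ℝ} (ht : 0 ≤ t) : (1 + t) ^ (-(9 : ℝ) / 8) ≤ (1 + t)⁻¹ := by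
  rw [← Real.rpow_neg_one]
  exact Real.rpow_le_rpow_of_exponent_le (by linarith) (by norm_num)

namespace IsSmoothRarefaction

variable {f : ℝ → ℝ} {U : ℝ → ℝ → ℝ} {um up CU t t₀ s : ℝ}

lemma mem_Icc (hU : IsSmoothRarefaction f um up CU U) (ht : 0 ≤ t) (x : ℝ) :
    U t x ∈ Icc um up :=
  ⟨(hU.range t ht x).1.le, (hU.range t ht x).2.le⟩

lemma pos (hU : IsSmoothRarefaction f um up CU U) : 0 < CU := by
  simpa using (hU.spaceDeriv_pos 0 le_rfl 0).trans_le (hU.spaceDeriv_le 0 le_rfl 0)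

lemma spaceDeriv_le_const (hU : IsSmoothRarefaction f um up CU U) (ht : 0 ≤ t) (x : ℝ) :
    ∂ₓ U t x ≤ CU :=
  (hU.spaceDeriv_le t ht x).trans (mul_le_of_le_one_right hU.pos.le (inv_one_add_le_one ht))

lemma timeDeriv_eq (hU : IsSmoothRarefaction f um up CU U) (hf : IsSmooth f) (ht : 0 ≤ t)
    (x : ℝ) : ∂ₜ U t x = -(deriv f (U t x) * ∂ₓ U t x) := by
  have hflux : deriv (fun y => f (U t y)) x = deriv f (U t x) * ∂ₓ U t x :=
    ((hf.hasDerivAt _).comp x (hU.smooth.hasDerivAt_space t x)).deriv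
  linarith [hU.equation t ht x]

lemma mixedDeriv_eq (hU : IsSmoothRarefaction f um up CU U) (hf : IsSmooth f) (ht : 0 ≤ t)
    (x : ℝ) : ∂ₜ (∂ₓ U) t x
      = -(deriv (deriv f) (U t x) * ∂ₓ U t x * ∂ₓ U t x + deriv f (U t x) * ∂ₓ (∂ₓ U) t x) := by
  rw [← hU.smooth.spaceDeriv_timeDeriv]
  have hflux : ∂ₜ U t = fun y => -(deriv f (U t y) * ∂ₓ U t y) :=
    funext fun y => hU.timeDeriv_eq hf ht y
  change deriv (∂ₜ U t) x = _
  rw [hflux]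
  exact (((hf.deriv.hasDerivAt _).comp x (hU.smooth.hasDerivAt_space t x)).mul
    (hU.smooth.space.hasDerivAt_space t x)).neg.deriv

/-- `r ↦ U r (y r) - U t₀ x` along the characteristic `y` through `(t₀, x)` has derivative
`-(increment of f') · ∂ₓ U`, so it vanishes by Grönwall's inequality. -/
lemma apply_characteristic (hU : IsSmoothRarefaction f um up CU U) (hf : IsSmooth f)
    (ht₀ : 0 ≤ t₀) (hs : t₀ ≤ s) (x : ℝ) :
    U s (x + deriv f (U t₀ x) * (s - t₀)) = U t₀ x := by
  obtain ⟨L, hL⟩ := hf.deriv.deriv.exists_abs_le um up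
  set a := U t₀ x with ha
  set y : ℝ → ℝ := fun r => x + deriv f a * (r - t₀) with hy
  have hy' (r : ℝ) : HasDerivAt y (deriv f a) r :=
    ((((hasDerivAt_id r).sub_const t₀).const_mul (deriv f a)).const_add x).congr_deriv (mul_one _)
  have hd (r : ℝ) : HasDerivAt (fun r => U r (y r) - a)
      (1 * ∂ₜ U r (y r) + deriv f a * ∂ₓ U r (y r)) r :=
    (hU.smooth.hasDerivAt_comp (hasDerivAt_id r) (hy' r)).sub_const a
  refine sub_eq_zero.1 (eq_zero_of_abs_deriv_le_mul_abs_self_of_eq_zero_right (K := L * CU)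
    (f := fun r => U r (y r) - a) (a := t₀) (b := s)
    (fun r _ => (hd r).continuousAt.continuousWithinAt) (fun r _ => (hd r).hasDerivWithinAt)
    (by simp [ha, hy]) (fun r hr => ?_) s ⟨hs, le_rfl⟩)
  have hr0 : 0 ≤ r := ht₀.trans hr.1
  have hpos := hU.spaceDeriv_pos r hr0 (y r)
  have hincr : |increment (deriv f) a (U r (y r) - a)| ≤ L * |U r (y r) - a| :=
    abs_increment_le hf.deriv.differentiable fun z hz => hL z
      (uIcc_subset_Icc (hU.mem_Icc ht₀ x) (by simpa using hU.mem_Icc hr0 (y r)) hz)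
  calc ‖1 * ∂ₜ U r (y r) + deriv f a * ∂ₓ U r (y r)‖
      = |increment (deriv f) a (U r (y r) - a)| * ∂ₓ U r (y r) := by
        rw [hU.timeDeriv_eq hf hr0, ← abs_of_pos hpos, ← abs_mul, Real.norm_eq_abs, ← abs_neg,
          abs_of_pos hpos]
        simp only [increment, add_sub_cancel]
        ring_nf
    _ ≤ L * |U r (y r) - a| * CU :=
        mul_le_mul hincr (hU.spaceDeriv_le_const hr0 _) hpos.le ((abs_nonneg _).trans hincr)
    _ = L * CU * ‖U r (y r) - a‖ := by rw [Real.norm_eq_abs]; ring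

lemma spaceDeriv_characteristic (hU : IsSmoothRarefaction f um up CU U) (hf : IsSmooth f)
    (ht₀ : 0 ≤ t₀) (hs : t₀ ≤ s) (x : ℝ) :
    ∂ₓ U s (x + deriv f (U t₀ x) * (s - t₀)) *
      (1 + deriv (deriv f) (U t₀ x) * ∂ₓ U t₀ x * (s - t₀)) = ∂ₓ U t₀ x := by
  have hY : HasDerivAt (fun x => x + deriv f (U t₀ x) * (s - t₀))
      (1 + deriv (deriv f) (U t₀ x) * ∂ₓ U t₀ x * (s - t₀)) x :=
    (hasDerivAt_id x).add
      (((hf.deriv.hasDerivAt _).comp x (hU.smooth.hasDerivAt_space t₀ x)).mul_const _)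
  have h := (hU.smooth.hasDerivAt_space s _).comp x hY
  rw [show U s ∘ _ = U t₀ from funext fun x => hU.apply_characteristic hf ht₀ hs x] at h
  exact h.unique (hU.smooth.hasDerivAt_space t₀ x)

lemma secondDeriv_characteristic (hU : IsSmoothRarefaction f um up CU U) (hf : IsSmooth f)
    (ht₀ : 0 ≤ t₀) (hs : t₀ ≤ s) (x : ℝ) :
    ∂ₓ (∂ₓ U) s (x + deriv f (U t₀ x) * (s - t₀)) *
        (1 + deriv (deriv f) (U t₀ x) * ∂ₓ U t₀ x * (s - t₀)) ^ 2 +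
      ∂ₓ U s (x + deriv f (U t₀ x) * (s - t₀)) *
        ((deriv (deriv (deriv f)) (U t₀ x) * ∂ₓ U t₀ x ^ 2 +
          deriv (deriv f) (U t₀ x) * ∂ₓ (∂ₓ U) t₀ x) * (s - t₀)) = ∂ₓ (∂ₓ U) t₀ x := by
  have hUx := hU.smooth.hasDerivAt_space t₀ x
  have hY : HasDerivAt (fun x => x + deriv f (U t₀ x) * (s - t₀))
      (1 + deriv (deriv f) (U t₀ x) * ∂ₓ U t₀ x * (s - t₀)) x :=
    (hasDerivAt_id x).add (((hf.deriv.hasDerivAt _).comp x hUx).mul_const _)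
  have hD := ((((hf.deriv.deriv.hasDerivAt _).comp x hUx).mul
    (hU.smooth.space.hasDerivAt_space t₀ x)).mul_const (s - t₀)).const_add 1
  have h := ((hU.smooth.space.hasDerivAt_space s _).comp x hY).mul hD
  have hUx_eq := h.congr_of_eventuallyEq (.of_forall fun x =>
    (hU.spaceDeriv_characteristic hf ht₀ hs x).symm)
  have heq := hUx_eq.unique (hU.smooth.space.hasDerivAt_space t₀ x)
  simp only [Function.comp_apply, Pi.mul_apply] at heq
  linear_combination heq

/-- Follow the characteristic for the time `1 / ∂ₓU`: by then the decay rate of `∂ₓ²U` is at most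
`∂ₓU`, while the characteristics have spread by the bounded factor `1 + f''(U)`. -/
lemma exists_abs_secondDeriv_le (hU : IsSmoothRarefaction f um up CU U) (hf : IsSmooth f) :
    ∃ C, ∀ t, 0 ≤ t → ∀ x, |∂ₓ (∂ₓ U) t x| ≤ C * ∂ₓ U t x := by
  obtain ⟨L, hL⟩ := hf.deriv.deriv.exists_abs_le um up
  obtain ⟨K, hK⟩ := hf.deriv.deriv.deriv.exists_abs_le um up
  refine ⟨CU * (1 + L) ^ 3 + K * CU, fun t ht x => ?_⟩
  set w := ∂ₓ U t x with hw_def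
  have hw : 0 < w := hU.spaceDeriv_pos t ht x
  have hs : 0 ≤ t + w⁻¹ := by positivity
  set y := x + deriv f (U t x) * (t + w⁻¹ - t) with hy
  have hfirst := hU.spaceDeriv_characteristic hf ht (by simpa using hw.le : t ≤ t + w⁻¹) x
  have hsecond := hU.secondDeriv_characteristic hf ht (by simpa using hw.le : t ≤ t + w⁻¹) x
  rw [← hy, ← hw_def, add_sub_cancel_left, mul_assoc, mul_inv_cancel₀ hw.ne', mul_one]
    at hfirst hsecond
  have hUxx : ∂ₓ (∂ₓ U) t x = ∂ₓ (∂ₓ U) (t + w⁻¹) y * (1 + deriv (deriv f) (U t x)) ^ 3 +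
      deriv (deriv (deriv f)) (U t x) * w ^ 2 := by
    have hinv : w * w⁻¹ = 1 := mul_inv_cancel₀ hw.ne'
    linear_combination (-(1 + deriv (deriv f) (U t x))) * hsecond +
      (deriv (deriv (deriv f)) (U t x) * w ^ 2 + deriv (deriv f) (U t x) * ∂ₓ (∂ₓ U) t x) *
        (w⁻¹ * hfirst + hinv)
  have hspread : |1 + deriv (deriv f) (U t x)| ≤ 1 + L :=
    (abs_add_le _ _).trans (by simpa using hL _ (hU.mem_Icc ht x))
  have hdecay : |∂ₓ (∂ₓ U) (t + w⁻¹) y| ≤ CU * w := by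
    refine ((le_add_of_nonneg_left (L2norm_nonneg _)).trans
      (hU.secondDeriv_le _ hs y)).trans (mul_le_mul_of_nonneg_left ?_ hU.pos.le)
    exact (rpow_le_inv_one_add hs).trans (inv_le_of_inv_le₀ hw (by linarith))
  calc |∂ₓ (∂ₓ U) t x|
      ≤ |∂ₓ (∂ₓ U) (t + w⁻¹) y| * |1 + deriv (deriv f) (U t x)| ^ 3 +
          |deriv (deriv (deriv f)) (U t x)| * (w * w) := by
        rw [hUxx, ← abs_pow, ← abs_mul, ← sq, ← abs_of_nonneg (sq_nonneg w), ← abs_mul,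
          abs_of_nonneg (sq_nonneg w)]
        exact abs_add_le _ _
    _ ≤ CU * w * (1 + L) ^ 3 + K * (CU * w) := by
        have hK0 : 0 ≤ K := (abs_nonneg _).trans (hK _ (hU.mem_Icc ht x))
        have hUx : w ≤ CU := hU.spaceDeriv_le_const ht x
        have hCU := hU.pos
        gcongr
        exact hK _ (hU.mem_Icc ht x)
    _ = (CU * (1 + L) ^ 3 + K * CU) * w := by ring

lemma memLp_spaceDeriv (hU : IsSmoothRarefaction f um up CU U) (ht : 0 ≤ t) :
    MemLp (∂ₓ U t) 2 := by
  have hcont := hU.smooth.space.slice_continuous t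
  have hint : Integrable (∂ₓ U t) := integrable_of_hasDerivAt_of_nonneg
    (hU.smooth.hasDerivAt_space t) hcont (fun x => (hU.spaceDeriv_pos t ht x).le) (hU.mem_Icc ht)
  refine (memLp_two_iff_integrable_sq hcont.aestronglyMeasurable).2
    ((hint.const_mul CU).mono' (hcont.pow 2).aestronglyMeasurable (.of_forall fun x => ?_))
  rw [Real.norm_of_nonneg (sq_nonneg _), sq]
  exact mul_le_mul_of_nonneg_right (hU.spaceDeriv_le_const ht x) (hU.spaceDeriv_pos t ht x).le

lemma integral_secondDeriv_sq_le (hU : IsSmoothRarefaction f um up CU U) (ht : 0 ≤ t) :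
    ∫ x, ∂ₓ (∂ₓ U) t x ^ 2 ≤ (CU * (1 + t) ^ (-(9 : ℝ) / 8)) ^ 2 :=
  integral_sq_le_of_L2norm_le
    ((le_add_of_nonneg_right (abs_nonneg _)).trans (hU.secondDeriv_le t ht 0))

lemma integral_mixedDeriv_sq_le (hU : IsSmoothRarefaction f um up CU U) (ht : 0 ≤ t) :
    ∫ x, ∂ₜ (∂ₓ U) t x ^ 2 ≤ (CU * (1 + t)⁻¹) ^ 2 :=
  integral_sq_le_of_L2norm_le
    ((le_add_of_nonneg_right (abs_nonneg _)).trans (hU.mixedDeriv_le t ht 0))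

lemma abs_mixedDeriv_le (hU : IsSmoothRarefaction f um up CU U) (ht : 0 ≤ t) (x : ℝ) :
    |∂ₜ (∂ₓ U) t x| ≤ CU :=
  ((le_add_of_nonneg_left (L2norm_nonneg _)).trans (hU.mixedDeriv_le t ht x)).trans
    (mul_le_of_le_one_right hU.pos.le (inv_one_add_le_one ht))

lemma boundedInL2_secondDeriv (hU : IsSmoothRarefaction f um up CU U) (hf : IsSmooth f) (T : ℝ) :
    BoundedInL2 T (∂ₓ (∂ₓ U)) := by
  obtain ⟨C, hC⟩ := hU.exists_abs_secondDeriv_le hf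
  refine ⟨hU.smooth.space.space.continuous, fun t ht => ?_, CU ^ 2, fun t ht => ?_⟩
  · exact (memLp_two_of_abs_le (hU.memLp_spaceDeriv ht.1)
      (hU.smooth.space.space.slice_continuous t) fun x => by
        simpa only [abs_of_pos (hU.spaceDeriv_pos t ht.1 x)] using hC t ht.1 x).integrable_sq
  · refine (hU.integral_secondDeriv_sq_le ht.1).trans (pow_le_pow_left₀ ?_ ?_ 2)
    · exact mul_nonneg hU.pos.le (Real.rpow_nonneg (by linarith [ht.1]) _)
    · exact mul_le_of_le_one_right hU.pos.le
        ((rpow_le_inv_one_add ht.1).trans (inv_one_add_le_one ht.1))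

lemma boundedInL2_mixedDeriv (hU : IsSmoothRarefaction f um up CU U) (hf : IsSmooth f) (T : ℝ) :
    BoundedInL2 T (∂ₜ (∂ₓ U)) := by
  obtain ⟨C, hC⟩ := hU.exists_abs_secondDeriv_le hf
  obtain ⟨K₁, hK₁⟩ := hf.deriv.exists_abs_le um up
  obtain ⟨K₂, hK₂⟩ := hf.deriv.deriv.exists_abs_le um up
  refine ⟨hU.smooth.space.time.continuous, fun t ht => ?_, CU ^ 2, fun t ht => ?_⟩
  · refine (memLp_two_of_abs_le (C := K₂ * CU + K₁ * C) (hU.memLp_spaceDeriv ht.1)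
      (hU.smooth.space.time.slice_continuous t) fun x => ?_).integrable_sq
    have hpos := hU.spaceDeriv_pos t ht.1 x
    have hf' := hK₁ _ (hU.mem_Icc ht.1 x)
    have hf'' := hK₂ _ (hU.mem_Icc ht.1 x)
    rw [hU.mixedDeriv_eq hf ht.1, abs_neg, abs_of_pos hpos]
    calc |deriv (deriv f) (U t x) * ∂ₓ U t x * ∂ₓ U t x + deriv f (U t x) * ∂ₓ (∂ₓ U) t x|
        ≤ |deriv (deriv f) (U t x)| * ∂ₓ U t x * ∂ₓ U t x +
            |deriv f (U t x)| * |∂ₓ (∂ₓ U) t x| := by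
          refine (abs_add_le _ _).trans_eq ?_
          rw [abs_mul, abs_mul, abs_mul, abs_of_pos hpos]
      _ ≤ K₂ * CU * ∂ₓ U t x + K₁ * (C * ∂ₓ U t x) := by
          have hK₁_nonneg : 0 ≤ K₁ := (abs_nonneg _).trans hf'
          have hK₂_nonneg : 0 ≤ K₂ := (abs_nonneg _).trans hf''
          gcongr
          · exact hU.spaceDeriv_le_const ht.1 x
          · exact hC t ht.1 x
      _ = (K₂ * CU + K₁ * C) * ∂ₓ U t x := by ring
  · refine (hU.integral_mixedDeriv_sq_le ht.1).trans (pow_le_pow_left₀ ?_ ?_ 2)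
    · exact mul_nonneg hU.pos.le (inv_nonneg.2 (by linarith [ht.1]))
    · exact mul_le_of_le_one_right hU.pos.le (inv_one_add_le_one ht.1)

end IsSmoothRarefaction

lemma JointlySmooth.mem_Icc_of_timeDeriv_eq {W a b : ℝ → ℝ → ℝ} {A B K₁ K₂ T t : ℝ}
    (hW : JointlySmooth W) (hB : ∀ t ∈ Icc 0 T, ∀ x, |W t x| ≤ B)
    (ha : ∀ t ∈ Icc 0 T, ∀ x, a t x ∈ Icc 0 A) (hb : ∀ t ∈ Icc 0 T, ∀ x, |b t x| ≤ A)
    (heq : ∀ t ∈ Icc 0 T, ∀ x, ∂ₜ W t x = a t x * ∂ₓ (∂ₓ W) t x + b t x * ∂ₓ W t x)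
    (hK : ∀ x, W 0 x ∈ Icc K₁ K₂) (ht : t ∈ Icc 0 T) (x : ℝ) : W t x ∈ Icc K₁ K₂ := by
  have hspace (g : ℝ → ℝ → ℝ) : ∂ₓ (fun t x => -g t x) = fun t x => -∂ₓ g t x :=
    funext₂ fun _ _ => deriv.fun_neg
  have htime (t x : ℝ) : ∂ₜ (fun t x => -W t x) t x = -∂ₜ W t x := deriv.fun_neg
  refine ⟨neg_le_neg_iff.1 ?_, hW.le_of_timeDeriv_le (fun t ht x => (abs_le.1 (hB t ht x)).2) ha hb
    (fun t ht x => (heq t ht x).le) (fun x => (hK x).2) ht x⟩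
  refine JointlySmooth.le_of_timeDeriv_le (W := fun t x => -W t x) (ContDiff.neg hW)
    (fun t ht x => neg_le.1 (abs_le.1 (hB t ht x)).1) ha hb (fun t ht x => ?_)
    (fun x => neg_le_neg (hK x).1) ht x
  rw [hspace, hspace, htime, heq t ht x]
  linarith

/-! ### Perturbations of a smooth rarefaction wave -/

/-- The convective flux of the perturbation equation, `f(U + φ) - f(U)`. -/
def fluxGap (f : ℝ → ℝ) (U φ : ℝ → ℝ → ℝ) (t x : ℝ) : ℝ := increment f (U t x) (φ t x)

/-- The viscous stress of the perturbation equation, `σ(∂ₓU + ∂ₓφ) - σ(∂ₓU)`. -/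
noncomputable def stressGap (σ : ℝ → ℝ) (U φ : ℝ → ℝ → ℝ) (t x : ℝ) : ℝ :=
  increment σ (∂ₓ U t x) (∂ₓ φ t x)

/-- The source of the perturbation equation, `∂ₓ(σ(∂ₓU))`, in differentiated form. -/
noncomputable def waveStress (σ : ℝ → ℝ) (U : ℝ → ℝ → ℝ) (t x : ℝ) : ℝ :=
  deriv σ (∂ₓ U t x) * ∂ₓ (∂ₓ U) t x

/-- A smooth bounded solution `φ` on `[0, T]` of the equation satisfied by a perturbation of the
wave `U` of `∂ₜu + ∂ₓ(f(u)) = ∂ₓ(σ(∂ₓu))`, with the derivatives occurring in the energy estimates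
bounded in `L²`. -/
structure IsPerturbation (σ f : ℝ → ℝ) (U : ℝ → ℝ → ℝ) (T : ℝ) (φ : ℝ → ℝ → ℝ) : Prop where
  smooth : JointlySmooth φ
  equation : ∀ t ∈ Icc 0 T, ∀ x, ∂ₜ φ t x + ∂ₓ (fluxGap f U φ) t x - ∂ₓ (stressGap σ U φ) t x
    = deriv (fun y => σ (∂ₓ U t y)) x
  exists_abs_le : ∃ B, ∀ t ∈ Icc 0 T, ∀ x, |φ t x| ≤ B
  boundedInL2 : BoundedInL2 T φ
  boundedInL2_space : BoundedInL2 T (∂ₓ φ)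
  boundedInL2_second : BoundedInL2 T (∂ₓ (∂ₓ φ))
  boundedInL2_mixed : BoundedInL2 T (∂ₜ (∂ₓ φ))

section Gaps

variable {σ f g : ℝ → ℝ} {U a v φ : ℝ → ℝ → ℝ} {um up c₂ CU M T t : ℝ}

lemma isSmooth_potential (hg : IsSmooth g) : IsSmooth (potential g) :=
  contDiff_infty_iff_deriv.2 ⟨differentiable_potential hg.continuous, by
    rwa [deriv_potential hg.continuous]⟩

lemma JointlySmooth.spaceDeriv_add (ha : JointlySmooth a) (hv : JointlySmooth v) :
    ∂ₓ (fun t x => a t x + v t x) = fun t x => ∂ₓ a t x + ∂ₓ v t x :=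
  funext₂ fun t x => ((ha.hasDerivAt_space t x).add (hv.hasDerivAt_space t x)).deriv

lemma JointlySmooth.timeDeriv_add (ha : JointlySmooth a) (hv : JointlySmooth v) :
    ∂ₜ (fun t x => a t x + v t x) = fun t x => ∂ₜ a t x + ∂ₜ v t x :=
  funext₂ fun t x => ((ha.hasDerivAt_time t x).add (hv.hasDerivAt_time t x)).deriv

lemma JointlySmooth.increment_comp (hg : IsSmooth g) (ha : JointlySmooth a)
    (hv : JointlySmooth v) : JointlySmooth fun t x => increment g (a t x) (v t x) :=
  ContDiff.sub (ContDiff.comp hg (ContDiff.add ha hv)) (ContDiff.comp hg ha)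

lemma JointlySmooth.bregman_comp (hg : IsSmooth g) (ha : JointlySmooth a)
    (hv : JointlySmooth v) : JointlySmooth fun t x => bregman g (a t x) (v t x) :=
  ContDiff.sub (JointlySmooth.increment_comp hg ha hv) (ContDiff.mul (ContDiff.comp hg.deriv ha) hv)

lemma spaceDeriv_fluxGap (hf : IsSmooth f) (hU : JointlySmooth U) (hφ : JointlySmooth φ) :
    ∂ₓ (fluxGap f U φ) = fun t x => increment (deriv f) (U t x) (φ t x) * ∂ₓ U t x
      + deriv f (U t x + φ t x) * ∂ₓ φ t x :=
  funext₂ fun t x => (hasDerivAt_increment hf.differentiable (hU.hasDerivAt_space t x)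
    (hφ.hasDerivAt_space t x)).deriv

lemma spaceDeriv_stressGap (hσ : IsSmooth σ) (hU : JointlySmooth U) (hφ : JointlySmooth φ) :
    ∂ₓ (stressGap σ U φ) = fun t x => increment (deriv σ) (∂ₓ U t x) (∂ₓ φ t x) * ∂ₓ (∂ₓ U) t x
      + deriv σ (∂ₓ U t x + ∂ₓ φ t x) * ∂ₓ (∂ₓ φ) t x :=
  funext₂ fun t x => (hasDerivAt_increment hσ.differentiable (hU.space.hasDerivAt_space t x)
    (hφ.space.hasDerivAt_space t x)).deriv

lemma IsPerturbation.timeDeriv_eq (hφ : IsPerturbation σ f U T φ) (hσ : IsSmooth σ)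
    (hU : JointlySmooth U) (ht : t ∈ Icc 0 T) (x : ℝ) :
    ∂ₜ φ t x = -∂ₓ (fluxGap f U φ) t x + ∂ₓ (stressGap σ U φ) t x + waveStress σ U t x := by
  have hsource : deriv (fun y => σ (∂ₓ U t y)) x = waveStress σ U t x :=
    ((hσ.hasDerivAt _).comp x (hU.space.hasDerivAt_space t x)).deriv
  linarith [hφ.equation t ht x]

lemma IsPerturbation.timeDeriv_add_eq (hφ : IsPerturbation σ f U T φ) (hσ : IsSmooth σ)
    (hf : IsSmooth f) (hU : IsSmoothRarefaction f um up CU U) (ht : t ∈ Icc 0 T) (x : ℝ) :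
    ∂ₜ U t x + ∂ₜ φ t x = deriv σ (∂ₓ U t x + ∂ₓ φ t x) * (∂ₓ (∂ₓ U) t x + ∂ₓ (∂ₓ φ) t x)
      + -deriv f (U t x + φ t x) * (∂ₓ U t x + ∂ₓ φ t x) := by
  rw [hU.timeDeriv_eq hf ht.1, hφ.timeDeriv_eq hσ hU.smooth ht,
    spaceDeriv_fluxGap hf hU.smooth hφ.smooth, spaceDeriv_stressGap hσ hU.smooth hφ.smooth]
  simp only [increment, waveStress]
  ring

lemma IsPerturbation.add_mem_Icc (hφ : IsPerturbation σ f U T φ) (hσ : IsSmooth σ)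
    (hf : IsSmooth f) (hU : IsSmoothRarefaction f um up CU U) (hσ' : ∀ z, deriv σ z ∈ Icc 0 c₂)
    (hM : ∀ x, |φ 0 x| ≤ M) (ht : t ∈ Icc 0 T) (x : ℝ) :
    U t x + φ t x ∈ Icc (um - M) (up + M) := by
  obtain ⟨B, hB⟩ := hφ.exists_abs_le
  obtain ⟨L, hL⟩ := hf.deriv.exists_abs_le (um - B) (up + B)
  have mem_of_abs_le {t x R : ℝ} (ht : 0 ≤ t) (hR : |φ t x| ≤ R) :
      U t x + φ t x ∈ Icc (um - R) (up + R) := by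
    have hUtx := hU.mem_Icc ht x
    constructor <;> linarith [hUtx.1, hUtx.2, (abs_le.1 hR).1, (abs_le.1 hR).2]
  refine JointlySmooth.mem_Icc_of_timeDeriv_eq (W := fun t x => U t x + φ t x)
    (a := fun t x => deriv σ (∂ₓ U t x + ∂ₓ φ t x)) (b := fun t x => -deriv f (U t x + φ t x))
    (A := max c₂ L) (B := max |um - B| |up + B|) (ContDiff.add hU.smooth hφ.smooth)
    (fun t ht x => ?_) (fun t _ x => Icc_subset_Icc_right (le_max_left _ _) (hσ' _))
    (fun t ht x => ?_) (fun t ht x => ?_) (fun x => mem_of_abs_le le_rfl (hM x)) ht x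
  · have hmem := mem_of_abs_le ht.1 (hB t ht x)
    exact abs_le_max_abs_abs hmem.1 hmem.2
  · rw [abs_neg]
    exact (hL _ (mem_of_abs_le ht.1 (hB t ht x))).trans (le_max_right _ _)
  · rw [hU.smooth.timeDeriv_add hφ.smooth, hU.smooth.spaceDeriv_add hφ.smooth,
      hU.smooth.space.spaceDeriv_add hφ.smooth.space]
    exact hφ.timeDeriv_add_eq hσ hf hU ht x

end Gaps

/-! ### Time weights and a bootstrap inequality -/

lemma intervalIntegrable_time_weight {t : ℝ} (ht : 0 ≤ t) :
    IntervalIntegrable (fun s : ℝ => (1 + s) ^ (-(9 : ℝ) / 8)) volume 0 t := by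
  refine ContinuousOn.intervalIntegrable fun s hs => ContinuousAt.continuousWithinAt ?_
  rw [uIcc_of_le ht] at hs
  exact (continuousAt_const.add continuousAt_id).rpow_const (.inl (by linarith [hs.1] : 1 + s ≠ 0))

lemma integral_time_weight_le {t : ℝ} (ht : 0 ≤ t) :
    ∫ s in (0 : ℝ)..t, (1 + s) ^ (-(9 : ℝ) / 8) ≤ 8 := by
  rw [integral_comp_add_left (fun s : ℝ => s ^ (-(9 : ℝ) / 8)), integral_rpow]
  · have hpos : 0 ≤ (1 + t) ^ (-(1 : ℝ) / 8) := Real.rpow_nonneg (by linarith) _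
    norm_num
    linarith
  · refine .inr ⟨by norm_num, fun h => ?_⟩
    rw [uIcc_of_le (by linarith)] at h
    linarith [h.1]

lemma inv_one_add_sq_le {t : ℝ} (ht : 0 ≤ t) : (1 + t)⁻¹ ^ 2 ≤ (1 + t) ^ (-(9 : ℝ) / 8) := by
  rw [← Real.rpow_neg_one, ← Real.rpow_mul_natCast (by linarith)]
  exact Real.rpow_le_rpow_of_exponent_le (by linarith) (by norm_num)

lemma rpow_sq_le {t : ℝ} (ht : 0 ≤ t) :
    ((1 + t) ^ (-(9 : ℝ) / 8)) ^ 2 ≤ (1 + t) ^ (-(9 : ℝ) / 8) := by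
  rw [← Real.rpow_mul_natCast (by linarith)]
  exact Real.rpow_le_rpow_of_exponent_le (by linarith) (by norm_num)

/-- Apply the hypothesis to the least bound `Y² = sup y`, so that `Y² ≤ M² + K Y`. -/
lemma le_add_sq_of_forall_le_sq {ι : Type*} {s : Set ι} {y : ι → ℝ} {M K : ℝ} {i : ι}
    (hM : 0 ≤ M) (hK : 0 ≤ K) (hbdd : ∃ B, ∀ i ∈ s, y i ≤ B)
    (h : ∀ Y, 0 ≤ Y → (∀ i ∈ s, y i ≤ Y ^ 2) → ∀ i ∈ s, y i ≤ M ^ 2 + K * Y) (hi : i ∈ s) :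
    y i ≤ (M + K) ^ 2 := by
  obtain ⟨B, hB⟩ := hbdd
  obtain ⟨b, hb⟩ := Real.exists_isLUB ⟨y i, mem_image_of_mem y hi⟩
    ⟨B, forall_mem_image.2 hB⟩
  have hYsq : √b ^ 2 = max b 0 := Real.sq_sqrt'
  have hle (j : ι) (hj : j ∈ s) : y j ≤ √b ^ 2 :=
    (hb.1 (mem_image_of_mem y hj)).trans (hYsq ▸ le_max_left b 0)
  have hlub : b ≤ M ^ 2 + K * √b := hb.2 (forall_mem_image.2 (h _ (Real.sqrt_nonneg b) hle))
  have hquad : √b ^ 2 ≤ M ^ 2 + K * √b := hYsq ▸ max_le hlub (by positivity)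
  have hroot : √b ≤ M + K := by
    by_contra! hlt
    nlinarith [mul_nonneg hM hK]
  exact (hle i hi).trans (pow_le_pow_left₀ (Real.sqrt_nonneg b) hroot 2)

/-! ### The basic energy estimate -/

/-- A perturbation `φ` of a smooth rarefaction wave `U` for a convex flux `f` and a nondecreasing
stress `σ`, with explicit bounds for the slopes of the nonlinearities. The flux is controlled only
between `U` and `U + φ`. -/
structure PerturbedRarefaction (σ f : ℝ → ℝ) (um up CU c₂ L₁ L₂ T : ℝ) (U φ : ℝ → ℝ → ℝ) :
    Prop where
  smooth_stress : IsSmooth σ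
  smooth_flux : IsSmooth f
  deriv_stress_mem : ∀ z, deriv σ z ∈ Icc 0 c₂
  convex_flux : ∀ z, 0 ≤ deriv (deriv f) z
  rarefaction : IsSmoothRarefaction f um up CU U
  perturbation : IsPerturbation σ f U T φ
  abs_deriv_flux_le : ∀ t ∈ Icc 0 T, ∀ x, ∀ z ∈ uIcc (U t x) (U t x + φ t x), |deriv f z| ≤ L₁
  abs_deriv_deriv_flux_le : ∀ t ∈ Icc 0 T, ∀ x, ∀ z ∈ uIcc (U t x) (U t x + φ t x),
    |deriv (deriv f) z| ≤ L₂

namespace PerturbedRarefaction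

variable {σ f : ℝ → ℝ} {um up CU c₂ L₁ L₂ T t : ℝ} {U φ : ℝ → ℝ → ℝ}

lemma stressGap_smooth (S : PerturbedRarefaction σ f um up CU c₂ L₁ L₂ T U φ) :
    JointlySmooth (stressGap σ U φ) :=
  .increment_comp S.smooth_stress S.rarefaction.smooth.space S.perturbation.smooth.space

lemma fluxGap_smooth (S : PerturbedRarefaction σ f um up CU c₂ L₁ L₂ T U φ) :
    JointlySmooth (fluxGap f U φ) :=
  .increment_comp S.smooth_flux S.rarefaction.smooth S.perturbation.smooth

lemma slope_nonneg (S : PerturbedRarefaction σ f um up CU c₂ L₁ L₂ T U φ) : 0 ≤ c₂ :=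
  (S.deriv_stress_mem 0).1.trans (S.deriv_stress_mem 0).2

lemma abs_deriv_stress_le (S : PerturbedRarefaction σ f um up CU c₂ L₁ L₂ T U φ) (z : ℝ) :
    |deriv σ z| ≤ c₂ :=
  (abs_of_nonneg (S.deriv_stress_mem z).1).trans_le (S.deriv_stress_mem z).2

lemma abs_increment_deriv_stress_le
    (S : PerturbedRarefaction σ f um up CU c₂ L₁ L₂ T U φ) (a v : ℝ) :
    |increment (deriv σ) a v| ≤ c₂ :=
  abs_sub_le_of_nonneg_of_le (S.deriv_stress_mem _).1 (S.deriv_stress_mem _).2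
    (S.deriv_stress_mem _).1 (S.deriv_stress_mem _).2

lemma abs_waveStress_le (S : PerturbedRarefaction σ f um up CU c₂ L₁ L₂ T U φ) (t x : ℝ) :
    |waveStress σ U t x| ≤ c₂ * |∂ₓ (∂ₓ U) t x| :=
  (abs_mul _ _).trans_le (mul_le_mul_of_nonneg_right (S.abs_deriv_stress_le _) (abs_nonneg _))

lemma abs_stressGap_le (S : PerturbedRarefaction σ f um up CU c₂ L₁ L₂ T U φ) (t x : ℝ) :
    |stressGap σ U φ t x| ≤ c₂ * |∂ₓ φ t x| :=
  abs_increment_le S.smooth_stress.differentiable fun z _ => S.abs_deriv_stress_le z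

lemma abs_fluxGap_le (S : PerturbedRarefaction σ f um up CU c₂ L₁ L₂ T U φ) (ht : t ∈ Icc 0 T)
    (x : ℝ) : |fluxGap f U φ t x| ≤ L₁ * |φ t x| :=
  abs_increment_le S.smooth_flux.differentiable (S.abs_deriv_flux_le t ht x)

lemma abs_deriv_flux_add_le (S : PerturbedRarefaction σ f um up CU c₂ L₁ L₂ T U φ)
    (ht : t ∈ Icc 0 T) (x : ℝ) : |deriv f (U t x + φ t x)| ≤ L₁ :=
  S.abs_deriv_flux_le t ht x _ right_mem_uIcc

lemma abs_increment_deriv_flux_mul_le (S : PerturbedRarefaction σ f um up CU c₂ L₁ L₂ T U φ)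
    (ht : t ∈ Icc 0 T) (x : ℝ) :
    |increment (deriv f) (U t x) (φ t x) * ∂ₓ U t x| ≤ L₂ * (CU * (1 + t)⁻¹) * |φ t x| := by
  have hincr : |increment (deriv f) (U t x) (φ t x)| ≤ L₂ * |φ t x| :=
    abs_increment_le S.smooth_flux.deriv.differentiable (S.abs_deriv_deriv_flux_le t ht x)
  have hpos := (S.rarefaction.spaceDeriv_pos t ht.1 x).le
  rw [abs_mul, abs_of_nonneg hpos]
  calc _ ≤ L₂ * |φ t x| * (CU * (1 + t)⁻¹) :=
        mul_le_mul hincr (S.rarefaction.spaceDeriv_le t ht.1 x) hpos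
          ((abs_nonneg _).trans hincr)
    _ = L₂ * (CU * (1 + t)⁻¹) * |φ t x| := by ring

lemma second_lipschitz_nonneg (S : PerturbedRarefaction σ f um up CU c₂ L₁ L₂ T U φ)
    (ht : t ∈ Icc 0 T) : 0 ≤ L₂ :=
  (abs_nonneg _).trans (S.abs_deriv_deriv_flux_le t ht 0 _ left_mem_uIcc)

lemma boundedInL2_stressGap (S : PerturbedRarefaction σ f um up CU c₂ L₁ L₂ T U φ) :
    BoundedInL2 T (stressGap σ U φ) :=
  S.perturbation.boundedInL2_space.of_abs_le S.stressGap_smooth.continuous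
    fun t _ x => S.abs_stressGap_le t x

lemma boundedInL2_fluxGap (S : PerturbedRarefaction σ f um up CU c₂ L₁ L₂ T U φ) :
    BoundedInL2 T (fluxGap f U φ) :=
  S.perturbation.boundedInL2.of_abs_le S.fluxGap_smooth.continuous fun _ ht => S.abs_fluxGap_le ht

lemma boundedInL2_waveStress (S : PerturbedRarefaction σ f um up CU c₂ L₁ L₂ T U φ) :
    BoundedInL2 T (waveStress σ U) :=
  (S.rarefaction.boundedInL2_secondDeriv S.smooth_flux T).of_abs_le
    ((S.smooth_stress.deriv.continuous.comp S.rarefaction.smooth.space.continuous).mul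
      S.rarefaction.smooth.space.space.continuous) fun t _ => S.abs_waveStress_le t

lemma boundedInL2_spaceDeriv_fluxGap (S : PerturbedRarefaction σ f um up CU c₂ L₁ L₂ T U φ) :
    BoundedInL2 T (∂ₓ (fluxGap f U φ)) := by
  have hU := S.rarefaction.smooth
  have hφ := S.perturbation.smooth
  rw [spaceDeriv_fluxGap S.smooth_flux hU hφ]
  refine (S.perturbation.boundedInL2.of_abs_le (C := L₂ * CU) ?_ fun t ht x => ?_).add
    (S.perturbation.boundedInL2_space.bdd_mul
      (S.smooth_flux.deriv.continuous.comp (hU.continuous.add hφ.continuous))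
      fun _ ht => S.abs_deriv_flux_add_le ht)
  · exact (JointlySmooth.increment_comp S.smooth_flux.deriv hU hφ).continuous.mul
      hU.space.continuous
  · refine (S.abs_increment_deriv_flux_mul_le ht x).trans ?_
    have hL₂ := S.second_lipschitz_nonneg ht
    gcongr
    exact mul_le_of_le_one_right S.rarefaction.pos.le (inv_one_add_le_one ht.1)

lemma boundedInL2_spaceDeriv_stressGap (S : PerturbedRarefaction σ f um up CU c₂ L₁ L₂ T U φ) :
    BoundedInL2 T (∂ₓ (stressGap σ U φ)) := by
  have hU := S.rarefaction.smooth.space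
  have hφ := S.perturbation.smooth.space
  rw [spaceDeriv_stressGap S.smooth_stress S.rarefaction.smooth S.perturbation.smooth]
  exact ((S.rarefaction.boundedInL2_secondDeriv S.smooth_flux T).bdd_mul (C := c₂)
      (JointlySmooth.increment_comp S.smooth_stress.deriv hU hφ).continuous fun _ _ _ =>
        S.abs_increment_deriv_stress_le _ _).add
    (S.perturbation.boundedInL2_second.bdd_mul
      (S.smooth_stress.deriv.continuous.comp (hU.continuous.add hφ.continuous))
      fun _ _ _ => S.abs_deriv_stress_le _)

lemma boundedInL2_timeDeriv (S : PerturbedRarefaction σ f um up CU c₂ L₁ L₂ T U φ) :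
    BoundedInL2 T (∂ₜ φ) :=
  ((S.boundedInL2_spaceDeriv_fluxGap.neg.add S.boundedInL2_spaceDeriv_stressGap).add
    S.boundedInL2_waveStress).of_abs_le (C := 1) S.perturbation.smooth.time.continuous
    fun t ht x => by
      rw [one_mul, S.perturbation.timeDeriv_eq S.smooth_stress S.rarefaction.smooth ht]

/-- Integrate `d/dx` of the Bregman remainder of a primitive of `f`: the other term of this total
derivative, the remainder of the convex flux times `∂ₓU`, is nonnegative. -/
lemma integral_spaceDeriv_mul_fluxGap_nonpos
    (S : PerturbedRarefaction σ f um up CU c₂ L₁ L₂ T U φ) (ht : t ∈ Icc 0 T) :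
    ∫ x, ∂ₓ φ t x * fluxGap f U φ t x ≤ 0 := by
  have hf := S.smooth_flux
  have hU := S.rarefaction.smooth
  have hφ := S.perturbation.smooth
  have hF := isSmooth_potential hf
  have hF' : deriv (potential f) = f := deriv_potential hf.continuous
  have hd (x : ℝ) : HasDerivAt (fun y => bregman (potential f) (U t y) (φ t y))
      (∂ₓ φ t x * fluxGap f U φ t x + bregman f (U t x) (φ t x) * ∂ₓ U t x) x := by
    simpa only [hF', fluxGap, mul_comm] using hasDerivAt_bregman hF.differentiable
      hF.deriv.differentiable (hU.hasDerivAt_space t x) (hφ.hasDerivAt_space t x)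
  have hpotential : BoundedInL1 T fun t x => bregman (potential f) (U t x) (φ t x) :=
    S.perturbation.boundedInL2.boundedInL1_of_abs_le
      (JointlySmooth.bregman_comp hF hU hφ).continuous fun s hs x =>
        abs_bregman_le hF.differentiable hF.deriv.differentiable
          (by simpa only [hF'] using S.abs_deriv_flux_le s hs x)
  have hremainder : BoundedInL1 T fun t x => bregman f (U t x) (φ t x) * ∂ₓ U t x := by
    refine S.perturbation.boundedInL2.boundedInL1_of_abs_le (C := L₂ / 2 * CU)
      ((JointlySmooth.bregman_comp hf hU hφ).continuous.mul hU.space.continuous) fun s hs x => ?_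
    have hbreg := abs_bregman_le hf.differentiable hf.deriv.differentiable
      (S.abs_deriv_deriv_flux_le s hs x)
    have hpos := (S.rarefaction.spaceDeriv_pos s hs.1 x).le
    rw [abs_mul, abs_of_nonneg hpos, mul_right_comm]
    exact mul_le_mul hbreg (S.rarefaction.spaceDeriv_le_const hs.1 x) hpos
      ((abs_nonneg _).trans hbreg)
  have hproduct := S.perturbation.boundedInL2_space.mul S.boundedInL2_fluxGap
  have htotal := integral_eq_zero_of_hasDerivAt_of_integrable hd
    ((hproduct.integrable t ht).add (hremainder.integrable t ht)) (hpotential.integrable t ht)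
  rw [MeasureTheory.integral_add (hproduct.integrable t ht) (hremainder.integrable t ht)] at htotal
  have hnonneg : 0 ≤ ∫ x, bregman f (U t x) (φ t x) * ∂ₓ U t x := by
    refine integral_nonneg fun x => mul_nonneg ?_ (S.rarefaction.spaceDeriv_pos t ht.1 x).le
    simpa using mul_sq_le_bregman (m := 0) hf.differentiable hf.deriv.differentiable
      fun z _ => S.convex_flux z
  linarith

lemma integral_mul_timeDeriv_le (S : PerturbedRarefaction σ f um up CU c₂ L₁ L₂ T U φ)
    (ht : t ∈ Icc 0 T) : ∫ x, φ t x * ∂ₜ φ t x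
      ≤ -(∫ x, ∂ₓ φ t x * stressGap σ U φ t x) + ∫ x, φ t x * waveStress σ U t x := by
  have hφ := S.perturbation.boundedInL2
  have hφx := S.perturbation.boundedInL2_space.memLp ht
  have hflux : ∫ x, φ t x * ∂ₓ (fluxGap f U φ) t x = -∫ x, ∂ₓ φ t x * fluxGap f U φ t x :=
    integral_mul_deriv_eq_neg (hφ.memLp ht) (S.boundedInL2_fluxGap.memLp ht) hφx
      (S.boundedInL2_spaceDeriv_fluxGap.memLp ht) (S.perturbation.smooth.hasDerivAt_space t)
      (S.fluxGap_smooth.hasDerivAt_space t)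
  have hstress : ∫ x, φ t x * ∂ₓ (stressGap σ U φ) t x = -∫ x, ∂ₓ φ t x * stressGap σ U φ t x :=
    integral_mul_deriv_eq_neg (hφ.memLp ht) (S.boundedInL2_stressGap.memLp ht) hφx
      (S.boundedInL2_spaceDeriv_stressGap.memLp ht) (S.perturbation.smooth.hasDerivAt_space t)
      (S.stressGap_smooth.hasDerivAt_space t)
  have hflux_int := (hφ.mul S.boundedInL2_spaceDeriv_fluxGap).integrable t ht
  have hstress_int := (hφ.mul S.boundedInL2_spaceDeriv_stressGap).integrable t ht
  have hwave_int := (hφ.mul S.boundedInL2_waveStress).integrable t ht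
  have hgap_int : Integrable fun x =>
      φ t x * ∂ₓ (stressGap σ U φ) t x - φ t x * ∂ₓ (fluxGap f U φ) t x :=
    hstress_int.sub hflux_int
  calc ∫ x, φ t x * ∂ₜ φ t x
      = ∫ x, φ t x * ∂ₓ (stressGap σ U φ) t x - φ t x * ∂ₓ (fluxGap f U φ) t x
          + φ t x * waveStress σ U t x := by
        refine integral_congr_ae (.of_forall fun x => ?_)
        dsimp only
        rw [S.perturbation.timeDeriv_eq S.smooth_stress S.rarefaction.smooth ht]
        ring
    _ = -(∫ x, ∂ₓ φ t x * stressGap σ U φ t x) + (∫ x, ∂ₓ φ t x * fluxGap f U φ t x)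
          + ∫ x, φ t x * waveStress σ U t x := by
        rw [MeasureTheory.integral_add hgap_int hwave_int,
          MeasureTheory.integral_sub hstress_int hflux_int, hflux, hstress]
        ring
    _ ≤ -(∫ x, ∂ₓ φ t x * stressGap σ U φ t x) + ∫ x, φ t x * waveStress σ U t x := by
        linarith [S.integral_spaceDeriv_mul_fluxGap_nonpos ht]

lemma integral_mul_waveStress_le (S : PerturbedRarefaction σ f um up CU c₂ L₁ L₂ T U φ)
    {Y : ℝ} (hY : 0 ≤ Y) (ht : t ∈ Icc 0 T) (h : ∫ x, φ t x ^ 2 ≤ Y ^ 2) :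
    ∫ x, φ t x * waveStress σ U t x ≤ c₂ * CU * Y * (1 + t) ^ (-(9 : ℝ) / 8) := by
  have hc₂ := S.slope_nonneg
  have hCU := S.rarefaction.pos
  have ht0 := ht.1
  have hwave : ∫ x, waveStress σ U t x ^ 2 ≤ (c₂ * (CU * (1 + t) ^ (-(9 : ℝ) / 8))) ^ 2 := by
    rw [mul_pow]
    exact (integral_sq_le_of_abs_le
      ((S.rarefaction.boundedInL2_secondDeriv S.smooth_flux T).memLp ht)
      (S.abs_waveStress_le t)).trans
      (mul_le_mul_of_nonneg_left (S.rarefaction.integral_secondDeriv_sq_le ht0) (sq_nonneg c₂))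
  refine (integral_mul_le_of_integral_sq_le (S.perturbation.boundedInL2.memLp ht)
    (S.boundedInL2_waveStress.memLp ht) hY (by positivity) h hwave).trans_eq ?_
  ring

lemma integral_sq_add_le (S : PerturbedRarefaction σ f um up CU c₂ L₁ L₂ T U φ)
    {Y : ℝ} (hY : 0 ≤ Y) (h : ∀ s ∈ Icc 0 T, ∫ x, φ s x ^ 2 ≤ Y ^ 2) (ht : t ∈ Icc 0 T) :
    (∫ x, φ t x ^ 2) + 2 * (∫ s in (0 : ℝ)..t, ∫ x, ∂ₓ φ s x * stressGap σ U φ s x)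
      ≤ (∫ x, φ 0 x ^ 2) + 16 * c₂ * CU * Y := by
  have hφ := S.perturbation.boundedInL2
  have hderiv : BoundedInL1 T fun t x => 2 * (φ t x * ∂ₜ φ t x) :=
    (hφ.mul S.boundedInL2_timeDeriv).const_mul 2
  have htime : (∫ x, φ t x ^ 2) - ∫ x, φ 0 x ^ 2
      = ∫ s in (0 : ℝ)..t, ∫ x, 2 * (φ s x * ∂ₜ φ s x) :=
    hderiv.integral_sub_eq_integral_deriv hφ.integrable_sq (fun s x => by
      simpa [mul_assoc] using (S.perturbation.smooth.hasDerivAt_time s x).fun_pow 2) ht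
  have hdiss := ((S.perturbation.boundedInL2_space.mul
    S.boundedInL2_stressGap).intervalIntegrable_integral ht).const_mul (-2)
  have hsource := (intervalIntegrable_time_weight ht.1).const_mul (2 * (c₂ * CU * Y))
  have hmono := integral_mono_on ht.1 (hderiv.intervalIntegrable_integral ht)
    (hdiss.add hsource) fun s hs => by
      have hs' : s ∈ Icc 0 T := ⟨hs.1, hs.2.trans ht.2⟩
      rw [MeasureTheory.integral_const_mul]
      linarith [S.integral_mul_timeDeriv_le hs', S.integral_mul_waveStress_le hY hs' (h s hs')]
  rw [intervalIntegral.integral_add hdiss hsource, intervalIntegral.integral_const_mul,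
    intervalIntegral.integral_const_mul] at hmono
  have hc₂ := S.slope_nonneg
  have hCU := S.rarefaction.pos
  have hweight : 2 * (c₂ * CU * Y) * (∫ s in (0 : ℝ)..t, (1 + s) ^ (-(9 : ℝ) / 8))
      ≤ 2 * (c₂ * CU * Y) * 8 :=
    mul_le_mul_of_nonneg_left (integral_time_weight_le ht.1) (by positivity)
  linarith

lemma integral_sq_le (S : PerturbedRarefaction σ f um up CU c₂ L₁ L₂ T U φ) {M : ℝ} (hM : 0 ≤ M)
    (h₀ : ∫ x, φ 0 x ^ 2 ≤ M ^ 2) (ht : t ∈ Icc 0 T) :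
    ∫ x, φ t x ^ 2 ≤ (M + 16 * c₂ * CU) ^ 2 := by
  have hc₂ := S.slope_nonneg
  have hCU := S.rarefaction.pos
  refine le_add_sq_of_forall_le_sq (y := fun t => ∫ x, φ t x ^ 2) hM (by positivity)
    S.perturbation.boundedInL2.exists_bound
    (fun Y hY h t ht => ?_) ht
  have hdiss : 0 ≤ ∫ s in (0 : ℝ)..t, ∫ x, ∂ₓ φ s x * stressGap σ U φ s x :=
    integral_nonneg ht.1 fun s _ => MeasureTheory.integral_nonneg fun x => by
      simpa [stressGap] using mul_sq_le_mul_increment (m := 0) S.smooth_stress.differentiable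
        fun z _ => (S.deriv_stress_mem z).1
  linarith [S.integral_sq_add_le hY h ht]

lemma integral_integral_spaceDeriv_mul_stressGap_le
    (S : PerturbedRarefaction σ f um up CU c₂ L₁ L₂ T U φ) {M : ℝ} (hM : 0 ≤ M)
    (h₀ : ∫ x, φ 0 x ^ 2 ≤ M ^ 2) (ht : t ∈ Icc 0 T) :
    2 * (∫ s in (0 : ℝ)..t, ∫ x, ∂ₓ φ s x * stressGap σ U φ s x) ≤ (M + 16 * c₂ * CU) ^ 2 := by
  have hc₂ := S.slope_nonneg
  have hCU := S.rarefaction.pos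
  have henergy := S.integral_sq_add_le (by positivity : 0 ≤ M + 16 * c₂ * CU)
    (fun s hs => S.integral_sq_le hM h₀ hs) ht
  have hsq : 0 ≤ ∫ x, φ t x ^ 2 := MeasureTheory.integral_nonneg fun _ => sq_nonneg _
  have hcross : 0 ≤ M * (16 * c₂ * CU) := by positivity
  linarith

/-! ### The entropy balance for the strain -/

lemma abs_bregman_potential_le (S : PerturbedRarefaction σ f um up CU c₂ L₁ L₂ T U φ) (t x : ℝ) :
    |bregman (potential σ) (∂ₓ U t x) (∂ₓ φ t x)| ≤ c₂ / 2 * ∂ₓ φ t x ^ 2 := by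
  have hpotential := isSmooth_potential S.smooth_stress
  refine abs_bregman_le hpotential.differentiable hpotential.deriv.differentiable fun z _ => ?_
  rw [deriv_potential S.smooth_stress.continuous]
  exact S.abs_deriv_stress_le z

lemma boundedInL1_bregman_potential (S : PerturbedRarefaction σ f um up CU c₂ L₁ L₂ T U φ) :
    BoundedInL1 T fun t x => bregman (potential σ) (∂ₓ U t x) (∂ₓ φ t x) :=
  S.perturbation.boundedInL2_space.boundedInL1_of_abs_le
    (JointlySmooth.bregman_comp (isSmooth_potential S.smooth_stress) S.rarefaction.smooth.space
      S.perturbation.smooth.space).continuous fun t _ => S.abs_bregman_potential_le t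

lemma integral_bregman_potential_le (S : PerturbedRarefaction σ f um up CU c₂ L₁ L₂ T U φ)
    (ht : t ∈ Icc 0 T) : ∫ x, bregman (potential σ) (∂ₓ U t x) (∂ₓ φ t x)
      ≤ c₂ / 2 * ∫ x, ∂ₓ φ t x ^ 2 := by
  rw [← MeasureTheory.integral_const_mul]
  exact integral_mono (S.boundedInL1_bregman_potential.integrable t ht)
    ((S.perturbation.boundedInL2_space.integrable_sq t ht).const_mul _)
    fun x => (le_abs_self _).trans (S.abs_bregman_potential_le t x)

lemma abs_bregman_stress_le (S : PerturbedRarefaction σ f um up CU c₂ L₁ L₂ T U φ) (t x : ℝ) :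
    |bregman σ (∂ₓ U t x) (∂ₓ φ t x)| ≤ c₂ * |∂ₓ φ t x| :=
  abs_bregman_le_of_deriv_mem_Icc S.smooth_stress.differentiable S.deriv_stress_mem

lemma boundedInL1_bregman_mul_mixedDeriv
    (S : PerturbedRarefaction σ f um up CU c₂ L₁ L₂ T U φ) :
    BoundedInL1 T fun t x => bregman σ (∂ₓ U t x) (∂ₓ φ t x) * ∂ₜ (∂ₓ U) t x :=
  (S.perturbation.boundedInL2_space.of_abs_le (JointlySmooth.bregman_comp S.smooth_stress
    S.rarefaction.smooth.space S.perturbation.smooth.space).continuous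
    fun t _ => S.abs_bregman_stress_le t).mul
    (S.rarefaction.boundedInL2_mixedDeriv S.smooth_flux T)

lemma boundedInL1_entropyRate (S : PerturbedRarefaction σ f um up CU c₂ L₁ L₂ T U φ) :
    BoundedInL1 T fun t x => -(∂ₓ (stressGap σ U φ) t x * ∂ₜ φ t x)
      + bregman σ (∂ₓ U t x) (∂ₓ φ t x) * ∂ₜ (∂ₓ U) t x := by
  simpa only [neg_mul] using (S.boundedInL2_spaceDeriv_stressGap.neg.mul
    S.boundedInL2_timeDeriv).add S.boundedInL1_bregman_mul_mixedDeriv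

lemma integral_bregman_potential_sub_eq
    (S : PerturbedRarefaction σ f um up CU c₂ L₁ L₂ T U φ) (ht : t ∈ Icc 0 T) :
    (∫ x, bregman (potential σ) (∂ₓ U t x) (∂ₓ φ t x))
        - ∫ x, bregman (potential σ) (∂ₓ U 0 x) (∂ₓ φ 0 x)
      = ∫ s in (0 : ℝ)..t, ∫ x, -(∂ₓ (stressGap σ U φ) s x * ∂ₜ φ s x)
          + bregman σ (∂ₓ U s x) (∂ₓ φ s x) * ∂ₜ (∂ₓ U) s x := by
  have hpotential := isSmooth_potential S.smooth_stress
  have hrate := (S.boundedInL2_stressGap.mul S.perturbation.boundedInL2_mixed).add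
    S.boundedInL1_bregman_mul_mixedDeriv
  rw [hrate.integral_sub_eq_integral_deriv S.boundedInL1_bregman_potential.integrable
    (fun s x => by
      simpa only [deriv_potential S.smooth_stress.continuous, stressGap] using hasDerivAt_bregman
        hpotential.differentiable hpotential.deriv.differentiable
        (S.rarefaction.smooth.space.hasDerivAt_time s x)
        (S.perturbation.smooth.space.hasDerivAt_time s x)) ht]
  refine intervalIntegral.integral_congr fun s hs => ?_
  rw [uIcc_of_le ht.1] at hs
  have hs' : s ∈ Icc 0 T := ⟨hs.1, hs.2.trans ht.2⟩
  have hparts : ∫ x, stressGap σ U φ s x * ∂ₜ (∂ₓ φ) s x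
      = -∫ x, ∂ₓ (stressGap σ U φ) s x * ∂ₜ φ s x := by
    refine integral_mul_deriv_eq_neg (S.boundedInL2_stressGap.memLp hs')
      (S.boundedInL2_timeDeriv.memLp hs') (S.boundedInL2_spaceDeriv_stressGap.memLp hs')
      (S.perturbation.boundedInL2_mixed.memLp hs') (S.stressGap_smooth.hasDerivAt_space s) ?_
    simpa only [S.perturbation.smooth.spaceDeriv_timeDeriv] using
      S.perturbation.smooth.time.hasDerivAt_space s
  have hbregman := S.boundedInL1_bregman_mul_mixedDeriv.integrable s hs'
  have hdiss : Integrable fun x => -(∂ₓ (stressGap σ U φ) s x * ∂ₜ φ s x) :=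
    ((S.boundedInL2_spaceDeriv_stressGap.mul S.boundedInL2_timeDeriv).integrable s hs').neg
  rw [MeasureTheory.integral_add
      ((S.boundedInL2_stressGap.mul S.perturbation.boundedInL2_mixed).integrable s hs') hbregman,
    MeasureTheory.integral_add hdiss hbregman, MeasureTheory.integral_neg, hparts]

end PerturbedRarefaction

/-! ### The pseudo-plastic weight -/

/-- The size `(1 + v²)^((p - 1) / 2)` of the slope of a pseudo-plastic stress at `v`. -/
noncomputable def weight (p v : ℝ) : ℝ := (1 + v ^ 2) ^ ((p - 1) / 2)

section Weight

variable {p v : ℝ}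

lemma weight_pos (p v : ℝ) : 0 < weight p v := Real.rpow_pos_of_pos (by positivity) _

lemma weight_sq (p v : ℝ) : weight p v ^ 2 = (1 + v ^ 2) ^ (p - 1) := by
  rw [weight, ← Real.rpow_mul_natCast (by positivity)]
  norm_num

lemma weight_le_one (hp : p ≤ 1) (v : ℝ) : weight p v ≤ 1 :=
  Real.rpow_le_one_of_one_le_of_nonpos (le_add_of_nonneg_right (sq_nonneg v)) (by linarith)

lemma continuous_weight (p : ℝ) : Continuous (weight p) :=
  (by fun_prop : Continuous fun v : ℝ => 1 + v ^ 2).rpow_const fun v =>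
    .inl (by positivity : (0 : ℝ) < 1 + v ^ 2).ne'

lemma sq_le_one_add_abs_mul_weight (hp : 0 ≤ p) (v : ℝ) :
    v ^ 2 ≤ (1 + |v|) * (weight p v * v ^ 2) := by
  have hpos : 0 < 1 + v ^ 2 := by positivity
  have hroot : √(1 + v ^ 2) ≤ 1 + |v| :=
    Real.sqrt_le_iff.2 ⟨by positivity, by nlinarith [sq_abs v, abs_nonneg v]⟩
  have hone : 1 ≤ √(1 + v ^ 2) * weight p v := by
    rw [Real.sqrt_eq_rpow, weight, ← Real.rpow_add hpos]
    exact Real.one_le_rpow (le_add_of_nonneg_right (sq_nonneg v)) (by linarith)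
  rw [← mul_assoc]
  exact le_mul_of_one_le_left (sq_nonneg v)
    (hone.trans (mul_le_mul_of_nonneg_right hroot (weight_pos p v).le))

lemma sq_le_rpow_mul_weight (hp : p ≤ 1) {N : ℝ} (h : (1 + v ^ 2) ^ ((1 : ℝ) / 2) ≤ N) :
    v ^ 2 ≤ N ^ (1 - p) * (weight p v * v ^ 2) := by
  have hpos : 0 < 1 + v ^ 2 := by positivity
  have hone : 1 ≤ N ^ (1 - p) * weight p v := by
    calc 1 = ((1 + v ^ 2) ^ ((1 : ℝ) / 2)) ^ (1 - p) * weight p v := by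
          rw [weight, ← Real.rpow_mul hpos.le, ← Real.rpow_add hpos,
            show (1 : ℝ) / 2 * (1 - p) + (p - 1) / 2 = 0 by ring, Real.rpow_zero]
      _ ≤ N ^ (1 - p) * weight p v := mul_le_mul_of_nonneg_right
          (Real.rpow_le_rpow (by positivity) h (by linarith)) (weight_pos p v).le
  rw [← mul_assoc]
  exact le_mul_of_one_le_left (sq_nonneg v) hone

lemma mul_weight_le {a b z : ℝ} (hp : p ≤ 1) (ha : a ∈ Icc 0 b) (hz : z ∈ uIcc a (a + v)) :
    (2 + 2 * b ^ 2) ^ ((p - 1) / 2) * weight p v ≤ weight p z := by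
  rw [weight, ← Real.mul_rpow (by positivity) (by positivity)]
  refine Real.rpow_le_rpow_of_nonpos (by positivity) ?_ (by linarith)
  have hdist : |z - a| ≤ |v| := by
    simpa [abs_sub_comm] using abs_sub_left_of_mem_uIcc hz
  have hsub : (z - a) ^ 2 ≤ v ^ 2 := sq_le_sq.2 hdist
  have hab : a ^ 2 ≤ b ^ 2 := pow_le_pow_left₀ ha.1 ha.2 2
  nlinarith [sq_nonneg (z - 2 * a), mul_nonneg (sq_nonneg b) (sq_nonneg v)]

end Weight

/-! ### The first-order energy estimate -/

/-- Completing squares in `W = V + D`, and then `V² ≤ 2 W² + 2 D²`. -/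
lemma neg_mul_add_le (A B C D V : ℝ) :
    -((D + V) * (-(B + A) + (D + V) + C)) ≤ -(V ^ 2 / 8) + A ^ 2 + B ^ 2 + C ^ 2 + D ^ 2 := by
  nlinarith [sq_nonneg ((V + D) / 2 - A), sq_nonneg ((V + D) / 2 - B),
    sq_nonneg ((V + D) / 2 + C), sq_nonneg (V + 2 * D), sq_nonneg D]

lemma mul_le_of_sq_le_one_add_mul {v q g K : ℝ} (hv : 0 ≤ v) (hg : g ∈ Icc 0 K)
    (h : v ^ 2 ≤ (1 + v) * q) : v * g ≤ 2 * (1 + K) * q + g ^ 2 := by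
  have hq : 0 ≤ q := nonneg_of_mul_nonneg_right ((sq_nonneg v).trans h) (by linarith)
  have hK : 0 ≤ K := hg.1.trans hg.2
  rcases le_total v 1 with hv1 | hv1
  · have hvq : v ^ 2 ≤ 2 * q := h.trans (mul_le_mul_of_nonneg_right (by linarith) hq)
    nlinarith [sq_nonneg (v - g), mul_nonneg hK hq, sq_nonneg v, sq_nonneg g]
  · have hvq : v ≤ 2 * q := by
      refine le_of_mul_le_mul_left ?_ (by linarith : 0 < v)
      nlinarith [mul_nonneg (sub_nonneg.2 hv1) hq]
    calc v * g ≤ 2 * q * K := mul_le_mul hvq hg.2 hg.1 (by linarith)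
      _ ≤ 2 * (1 + K) * q + g ^ 2 := by linarith [sq_nonneg g]

/-- A perturbed rarefaction wave for a stress whose slope between `∂ₓU` and `∂ₓU + ∂ₓφ` is bounded
below by `κ` times the weight of `∂ₓφ`. The factor `Λ` measures how much of `(∂ₓφ)²` is lost to
that weight. -/
structure WeightedPerturbation (σ f : ℝ → ℝ) (um up CU c₂ L₁ L₂ p κ Λ T : ℝ)
    (U φ : ℝ → ℝ → ℝ) : Prop extends PerturbedRarefaction σ f um up CU c₂ L₁ L₂ T U φ where
  exponent_mem : p ∈ Icc 0 1
  coercivity_pos : 0 < κ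
  one_le_factor : 1 ≤ Λ
  coercive : ∀ t ∈ Icc 0 T, ∀ x, ∀ z ∈ uIcc (∂ₓ U t x) (∂ₓ U t x + ∂ₓ φ t x),
    κ * weight p (∂ₓ φ t x) ≤ deriv σ z
  sq_le : ∀ t ∈ Icc 0 T, ∀ x, ∂ₓ φ t x ^ 2 ≤ Λ * (weight p (∂ₓ φ t x) * ∂ₓ φ t x ^ 2)

/-- The constant of the first-order energy estimate, for data bounded by `M`. -/
noncomputable def energyConstant (CU c₂ L₁ L₂ κ M : ℝ) : ℝ :=
  c₂ / 2 * M ^ 2 + (L₁ ^ 2 + 2 * c₂ * (1 + CU)) * ((M + 16 * c₂ * CU) ^ 2 / (2 * κ))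
    + 8 * ((L₂ * CU * (M + 16 * c₂ * CU)) ^ 2 + 2 * (c₂ * CU) ^ 2 + c₂ * CU ^ 2)

lemma energyConstant_pos {CU c₂ κ : ℝ} (hCU : 0 < CU) (hc₂ : 0 < c₂) (hκ : 0 < κ)
    (L₁ L₂ M : ℝ) : 0 < energyConstant CU c₂ L₁ L₂ κ M := by
  unfold energyConstant
  positivity

namespace WeightedPerturbation

variable {σ f : ℝ → ℝ} {um up CU c₂ L₁ L₂ p κ Λ T t : ℝ} {U φ : ℝ → ℝ → ℝ}

lemma boundedInL1_weight_mul_sq (S : WeightedPerturbation σ f um up CU c₂ L₁ L₂ p κ Λ T U φ) :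
    BoundedInL1 T fun t x => weight p (∂ₓ φ t x) * ∂ₓ φ t x ^ 2 := by
  have hcont := S.perturbation.smooth.space.continuous
  refine S.perturbation.boundedInL2_space.boundedInL1_of_abs_le (C := 1)
    (((continuous_weight p).comp hcont).mul (hcont.pow 2)) fun t _ x => ?_
  rw [abs_of_nonneg (mul_nonneg (weight_pos p _).le (sq_nonneg _))]
  exact mul_le_mul_of_nonneg_right (weight_le_one S.exponent_mem.2 _) (sq_nonneg _)

lemma boundedInL1_weight_mul_second_sq
    (S : WeightedPerturbation σ f um up CU c₂ L₁ L₂ p κ Λ T U φ) :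
    BoundedInL1 T fun t x => (weight p (∂ₓ φ t x) * ∂ₓ (∂ₓ φ) t x) ^ 2 := by
  have hφ := S.perturbation.smooth.space
  refine S.perturbation.boundedInL2_second.boundedInL1_of_abs_le (C := 1)
    ((((continuous_weight p).comp hφ.continuous).mul hφ.space.continuous).pow 2) fun t _ x => ?_
  rw [abs_of_nonneg (sq_nonneg _), mul_pow]
  exact mul_le_mul_of_nonneg_right
    (pow_le_one₀ (weight_pos p _).le (weight_le_one S.exponent_mem.2 _)) (sq_nonneg _)

lemma neg_spaceDeriv_stressGap_mul_timeDeriv_le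
    (S : WeightedPerturbation σ f um up CU c₂ L₁ L₂ p κ Λ T U φ) (ht : t ∈ Icc 0 T) (x : ℝ) :
    -(∂ₓ (stressGap σ U φ) t x * ∂ₜ φ t x)
      ≤ -(κ ^ 2 / 8) * (weight p (∂ₓ φ t x) * ∂ₓ (∂ₓ φ) t x) ^ 2
        + L₁ ^ 2 * Λ * (weight p (∂ₓ φ t x) * ∂ₓ φ t x ^ 2)
        + (L₂ * (CU * (1 + t)⁻¹)) ^ 2 * φ t x ^ 2 + 2 * c₂ ^ 2 * ∂ₓ (∂ₓ U) t x ^ 2 := by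
  have hflux : (deriv f (U t x + φ t x) * ∂ₓ φ t x) ^ 2
      ≤ L₁ ^ 2 * Λ * (weight p (∂ₓ φ t x) * ∂ₓ φ t x ^ 2) := by
    rw [mul_assoc]
    refine (sq_le_of_abs_le (C := L₁) ?_).trans
      (mul_le_mul_of_nonneg_left (S.sq_le t ht x) (sq_nonneg L₁))
    rw [abs_mul]
    exact mul_le_mul_of_nonneg_right (S.abs_deriv_flux_add_le ht x) (abs_nonneg _)
  have hincr := sq_le_of_abs_le (S.abs_increment_deriv_flux_mul_le ht x)
  have hwave := sq_le_of_abs_le (S.abs_waveStress_le t x)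
  have hgap : (increment (deriv σ) (∂ₓ U t x) (∂ₓ φ t x) * ∂ₓ (∂ₓ U) t x) ^ 2
      ≤ c₂ ^ 2 * ∂ₓ (∂ₓ U) t x ^ 2 := sq_le_of_abs_le <| by
    rw [abs_mul]
    exact mul_le_mul_of_nonneg_right (S.abs_increment_deriv_stress_le _ _) (abs_nonneg _)
  have hviscous : κ ^ 2 * (weight p (∂ₓ φ t x) * ∂ₓ (∂ₓ φ) t x) ^ 2
      ≤ (deriv σ (∂ₓ U t x + ∂ₓ φ t x) * ∂ₓ (∂ₓ φ) t x) ^ 2 := by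
    rw [← mul_pow, ← mul_assoc, mul_pow, mul_pow (deriv σ _)]
    exact mul_le_mul_of_nonneg_right (pow_le_pow_left₀
      (mul_pos S.coercivity_pos (weight_pos p _)).le (S.coercive t ht x _ right_mem_uIcc) 2)
      (sq_nonneg _)
  rw [S.perturbation.timeDeriv_eq S.smooth_stress S.rarefaction.smooth ht,
    spaceDeriv_fluxGap S.smooth_flux S.rarefaction.smooth S.perturbation.smooth,
    spaceDeriv_stressGap S.smooth_stress S.rarefaction.smooth S.perturbation.smooth]
  refine (neg_mul_add_le _ _ _ _ _).trans ?_
  linarith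

lemma bregman_mul_mixedDeriv_le (S : WeightedPerturbation σ f um up CU c₂ L₁ L₂ p κ Λ T U φ)
    (ht : t ∈ Icc 0 T) (x : ℝ) : bregman σ (∂ₓ U t x) (∂ₓ φ t x) * ∂ₜ (∂ₓ U) t x
      ≤ 2 * c₂ * (1 + CU) * (weight p (∂ₓ φ t x) * ∂ₓ φ t x ^ 2) + c₂ * ∂ₜ (∂ₓ U) t x ^ 2 := by
  have hweight : |∂ₓ φ t x| ^ 2
      ≤ (1 + |∂ₓ φ t x|) * (weight p (∂ₓ φ t x) * ∂ₓ φ t x ^ 2) := by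
    rw [sq_abs]
    exact sq_le_one_add_abs_mul_weight S.exponent_mem.1 _
  have hyoung := mul_le_of_sq_le_one_add_mul (abs_nonneg _)
    ⟨abs_nonneg _, S.rarefaction.abs_mixedDeriv_le ht.1 x⟩ hweight
  calc bregman σ (∂ₓ U t x) (∂ₓ φ t x) * ∂ₜ (∂ₓ U) t x
      ≤ c₂ * |∂ₓ φ t x| * |∂ₜ (∂ₓ U) t x| :=
        (le_abs_self _).trans ((abs_mul _ _).trans_le
          (mul_le_mul_of_nonneg_right (S.abs_bregman_stress_le t x) (abs_nonneg _)))
    _ ≤ c₂ * (2 * (1 + CU) * (weight p (∂ₓ φ t x) * ∂ₓ φ t x ^ 2) + |∂ₜ (∂ₓ U) t x| ^ 2) := by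
        rw [mul_assoc]
        exact mul_le_mul_of_nonneg_left hyoung S.slope_nonneg
    _ = _ := by rw [sq_abs]; ring

lemma mul_integral_weight_mul_sq_le
    (S : WeightedPerturbation σ f um up CU c₂ L₁ L₂ p κ Λ T U φ) (ht : t ∈ Icc 0 T) :
    κ * (∫ x, weight p (∂ₓ φ t x) * ∂ₓ φ t x ^ 2) ≤ ∫ x, ∂ₓ φ t x * stressGap σ U φ t x := by
  rw [← MeasureTheory.integral_const_mul]
  refine integral_mono ((S.boundedInL1_weight_mul_sq.integrable t ht).const_mul κ)
    ((S.perturbation.boundedInL2_space.mul S.boundedInL2_stressGap).integrable t ht) fun x => ?_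
  simpa only [mul_assoc, stressGap] using
    mul_sq_le_mul_increment S.smooth_stress.differentiable (S.coercive t ht x)

lemma mul_integral_weight_mul_sq_le_integral_bregman
    (S : WeightedPerturbation σ f um up CU c₂ L₁ L₂ p κ Λ T U φ) (ht : t ∈ Icc 0 T) :
    κ / 2 * (∫ x, weight p (∂ₓ φ t x) * ∂ₓ φ t x ^ 2)
      ≤ ∫ x, bregman (potential σ) (∂ₓ U t x) (∂ₓ φ t x) := by
  have hpotential := isSmooth_potential S.smooth_stress
  rw [← MeasureTheory.integral_const_mul]
  refine integral_mono ((S.boundedInL1_weight_mul_sq.integrable t ht).const_mul _)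
    (S.boundedInL1_bregman_potential.integrable t ht) fun x => ?_
  refine le_of_eq_of_le ?_ (mul_sq_le_bregman (m := κ * weight p (∂ₓ φ t x))
    hpotential.differentiable hpotential.deriv.differentiable ?_)
  · ring
  · simpa only [deriv_potential S.smooth_stress.continuous] using S.coercive t ht x

lemma integral_entropyRate_le (S : WeightedPerturbation σ f um up CU c₂ L₁ L₂ p κ Λ T U φ)
    {Y : ℝ} (ht : t ∈ Icc 0 T) (h : ∫ x, φ t x ^ 2 ≤ Y ^ 2) :
    ∫ x, -(∂ₓ (stressGap σ U φ) t x * ∂ₜ φ t x)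
        + bregman σ (∂ₓ U t x) (∂ₓ φ t x) * ∂ₜ (∂ₓ U) t x
      ≤ -(κ ^ 2 / 8) * (∫ x, (weight p (∂ₓ φ t x) * ∂ₓ (∂ₓ φ) t x) ^ 2)
        + (L₁ ^ 2 * Λ + 2 * c₂ * (1 + CU)) * (∫ x, weight p (∂ₓ φ t x) * ∂ₓ φ t x ^ 2)
        + ((L₂ * CU * Y) ^ 2 + 2 * (c₂ * CU) ^ 2 + c₂ * CU ^ 2) * (1 + t) ^ (-(9 : ℝ) / 8) := by
  have ht0 := ht.1
  have hdiss := (S.boundedInL1_weight_mul_second_sq.integrable t ht).const_mul (-(κ ^ 2 / 8))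
  have hstrain := (S.boundedInL1_weight_mul_sq.integrable t ht).const_mul
    (L₁ ^ 2 * Λ + 2 * c₂ * (1 + CU))
  have hφ := (S.perturbation.boundedInL2.integrable_sq t ht).const_mul
    ((L₂ * (CU * (1 + t)⁻¹)) ^ 2)
  have hUxx := ((S.rarefaction.boundedInL2_secondDeriv S.smooth_flux T).integrable_sq t
    ht).const_mul (2 * c₂ ^ 2)
  have hUtx := ((S.rarefaction.boundedInL2_mixedDeriv S.smooth_flux T).integrable_sq t
    ht).const_mul c₂
  have hmono := integral_mono (S.boundedInL1_entropyRate.integrable t ht)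
    ((((hdiss.add hstrain).add hφ).add hUxx).add hUtx) fun x => by
      simp only [Pi.add_apply]
      linarith [S.neg_spaceDeriv_stressGap_mul_timeDeriv_le ht x, S.bregman_mul_mixedDeriv_le ht x]
  rw [integral_add' (((hdiss.add hstrain).add hφ).add hUxx) hUtx,
    integral_add' ((hdiss.add hstrain).add hφ) hUxx, integral_add' (hdiss.add hstrain) hφ,
    integral_add' hdiss hstrain] at hmono
  simp only [MeasureTheory.integral_const_mul] at hmono
  have hφ_le := mul_le_mul_of_nonneg_left h (sq_nonneg (L₂ * (CU * (1 + t)⁻¹)))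
  have hUxx_le := mul_le_mul_of_nonneg_left (S.rarefaction.integral_secondDeriv_sq_le ht0)
    (by positivity : 0 ≤ 2 * c₂ ^ 2)
  have hUtx_le := mul_le_mul_of_nonneg_left (S.rarefaction.integral_mixedDeriv_sq_le ht0)
    S.slope_nonneg
  have hinv := mul_le_mul_of_nonneg_left (inv_one_add_sq_le ht0)
    (add_nonneg (sq_nonneg (L₂ * CU * Y)) (mul_nonneg S.slope_nonneg (sq_nonneg CU)))
  have hrpow := mul_le_mul_of_nonneg_left (rpow_sq_le ht0)
    (by positivity : 0 ≤ 2 * (c₂ * CU) ^ 2)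
  linarith

lemma integral_integral_weight_mul_sq_le
    (S : WeightedPerturbation σ f um up CU c₂ L₁ L₂ p κ Λ T U φ) {M : ℝ} (hM : 0 ≤ M)
    (h₀ : ∫ x, φ 0 x ^ 2 ≤ M ^ 2) (ht : t ∈ Icc 0 T) :
    ∫ s in (0 : ℝ)..t, ∫ x, weight p (∂ₓ φ s x) * ∂ₓ φ s x ^ 2
      ≤ (M + 16 * c₂ * CU) ^ 2 / (2 * κ) := by
  have hκ := S.coercivity_pos
  have hmono := integral_mono_on ht.1
    ((S.boundedInL1_weight_mul_sq.intervalIntegrable_integral ht).const_mul κ)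
    ((S.perturbation.boundedInL2_space.mul S.boundedInL2_stressGap).intervalIntegrable_integral ht)
    fun s hs => S.mul_integral_weight_mul_sq_le ⟨hs.1, hs.2.trans ht.2⟩
  rw [intervalIntegral.integral_const_mul] at hmono
  rw [le_div_iff₀ (by positivity)]
  linarith [S.integral_integral_spaceDeriv_mul_stressGap_le hM h₀ ht]

lemma integral_weight_add_le (S : WeightedPerturbation σ f um up CU c₂ L₁ L₂ p κ Λ T U φ)
    {Y : ℝ} (h : ∀ s ∈ Icc 0 T, ∫ x, φ s x ^ 2 ≤ Y ^ 2) (ht : t ∈ Icc 0 T) :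
    κ / 2 * (∫ x, weight p (∂ₓ φ t x) * ∂ₓ φ t x ^ 2)
        + κ ^ 2 / 8 * (∫ s in (0 : ℝ)..t, ∫ x, (weight p (∂ₓ φ s x) * ∂ₓ (∂ₓ φ) s x) ^ 2)
      ≤ c₂ / 2 * (∫ x, ∂ₓ φ 0 x ^ 2)
        + (L₁ ^ 2 * Λ + 2 * c₂ * (1 + CU))
          * (∫ s in (0 : ℝ)..t, ∫ x, weight p (∂ₓ φ s x) * ∂ₓ φ s x ^ 2)
        + 8 * ((L₂ * CU * Y) ^ 2 + 2 * (c₂ * CU) ^ 2 + c₂ * CU ^ 2) := by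
  have hdiss := (S.boundedInL1_weight_mul_second_sq.intervalIntegrable_integral ht).const_mul
    (-(κ ^ 2 / 8))
  have hstrain := (S.boundedInL1_weight_mul_sq.intervalIntegrable_integral ht).const_mul
    (L₁ ^ 2 * Λ + 2 * c₂ * (1 + CU))
  have hsource := (intervalIntegrable_time_weight ht.1).const_mul
    ((L₂ * CU * Y) ^ 2 + 2 * (c₂ * CU) ^ 2 + c₂ * CU ^ 2)
  have hmono := integral_mono_on ht.1 (S.boundedInL1_entropyRate.intervalIntegrable_integral ht)
    ((hdiss.add hstrain).add hsource) fun s hs =>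
      have hs' : s ∈ Icc 0 T := ⟨hs.1, hs.2.trans ht.2⟩
      S.integral_entropyRate_le hs' (h s hs')
  rw [← S.integral_bregman_potential_sub_eq ht,
    intervalIntegral.integral_add (hdiss.add hstrain) hsource,
    intervalIntegral.integral_add hdiss hstrain, intervalIntegral.integral_const_mul,
    intervalIntegral.integral_const_mul, intervalIntegral.integral_const_mul] at hmono
  have hc₂ := S.slope_nonneg
  have htime := mul_le_mul_of_nonneg_left (integral_time_weight_le ht.1)
    (by positivity : 0 ≤ (L₂ * CU * Y) ^ 2 + 2 * (c₂ * CU) ^ 2 + c₂ * CU ^ 2)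
  have hinitial := S.integral_bregman_potential_le (t := 0) ⟨le_rfl, ht.1.trans ht.2⟩
  linarith [S.mul_integral_weight_mul_sq_le_integral_bregman ht]

theorem energy_le (S : WeightedPerturbation σ f um up CU c₂ L₁ L₂ p κ Λ T U φ) {M : ℝ}
    (hM : 0 ≤ M) (h₀ : ∫ x, φ 0 x ^ 2 ≤ M ^ 2) (h₁ : ∫ x, ∂ₓ φ 0 x ^ 2 ≤ M ^ 2)
    (ht : t ∈ Icc 0 T) :
    κ / 2 * (∫ x, weight p (∂ₓ φ t x) * ∂ₓ φ t x ^ 2)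
        + κ ^ 2 / 8 * (∫ s in (0 : ℝ)..t, ∫ x, (weight p (∂ₓ φ s x) * ∂ₓ (∂ₓ φ) s x) ^ 2)
      ≤ energyConstant CU c₂ L₁ L₂ κ M * Λ := by
  have hκ := S.coercivity_pos
  have hc₂ := S.slope_nonneg
  have hCU := S.rarefaction.pos
  have hΛ := S.one_le_factor
  have hcoeff : 0 ≤ L₁ ^ 2 * Λ + 2 * c₂ * (1 + CU) :=
    add_nonneg (mul_nonneg (sq_nonneg _) (zero_le_one.trans hΛ)) (by positivity)
  have henergy := S.integral_weight_add_le (fun s hs => S.integral_sq_le hM h₀ hs) ht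
  have hstrain := mul_le_mul_of_nonneg_left (S.integral_integral_weight_mul_sq_le hM h₀ ht) hcoeff
  have hinitial := mul_le_mul_of_nonneg_left h₁ (by positivity : 0 ≤ c₂ / 2)
  refine (henergy.trans (add_le_add_left (add_le_add hinitial hstrain) _)).trans ?_
  have hM_le := le_mul_of_one_le_right (by positivity : 0 ≤ c₂ / 2 * M ^ 2) hΛ
  have hbregman_le := le_mul_of_one_le_right
    (by positivity : 0 ≤ 2 * c₂ * (1 + CU) * ((M + 16 * c₂ * CU) ^ 2 / (2 * κ))) hΛ
  have hsource_le := le_mul_of_one_le_right (by positivity : 0 ≤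
    8 * ((L₂ * CU * (M + 16 * c₂ * CU)) ^ 2 + 2 * (c₂ * CU) ^ 2 + c₂ * CU ^ 2)) hΛ
  unfold energyConstant
  linarith

end WeightedPerturbation

/-! ### Pseudo-plastic stresses -/

section PseudoPlastic

variable {σ f : ℝ → ℝ} {um up CU c₁ c₂ L₁ L₂ p N M T t : ℝ} {U φ : ℝ → ℝ → ℝ}

lemma deriv_mem_Icc_of_weight_le (hp : p ≤ 1) (hc₁ : 0 ≤ c₁) (hc₂ : 0 ≤ c₂)
    (hσ : ∀ v, c₁ * weight p v ≤ deriv σ v ∧ deriv σ v ≤ c₂ * weight p v) (z : ℝ) :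
    deriv σ z ∈ Icc 0 c₂ :=
  ⟨(mul_nonneg hc₁ (weight_pos p z).le).trans (hσ z).1,
    (hσ z).2.trans (mul_le_of_le_one_right hc₂ (weight_le_one hp z))⟩

lemma IsPerturbation.abs_le_and_integral_sq_le (hφ : IsPerturbation σ f U T φ) (hT : 0 ≤ T)
    (h : L2norm (φ 0) + L2norm (∂ₓ φ 0) + (⨆ x, |φ 0 x|) ≤ M) :
    (∀ x, |φ 0 x| ≤ M) ∧ ∫ x, φ 0 x ^ 2 ≤ M ^ 2 ∧ ∫ x, ∂ₓ φ 0 x ^ 2 ≤ M ^ 2 := by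
  have hφ₀ := L2norm_nonneg (φ 0)
  have hφx₀ := L2norm_nonneg (∂ₓ φ 0)
  have hsup : 0 ≤ ⨆ x, |φ 0 x| := Real.iSup_nonneg fun x => abs_nonneg _
  obtain ⟨B, hB⟩ := hφ.exists_abs_le
  have hbdd : BddAbove (range fun x => |φ 0 x|) := ⟨B, forall_mem_range.2 (hB 0 ⟨le_rfl, hT⟩)⟩
  exact ⟨fun x => (le_ciSup hbdd x).trans (by linarith),
    integral_sq_le_of_L2norm_le (by linarith), integral_sq_le_of_L2norm_le (by linarith)⟩

lemma IsPerturbation.perturbedRarefaction (hφ : IsPerturbation σ f U T φ) (hσ : IsSmooth σ)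
    (hσ' : ∀ z, deriv σ z ∈ Icc 0 c₂) (hf : IsSmooth f) (hconv : ∀ z, 0 ≤ deriv (deriv f) z)
    (hU : IsSmoothRarefaction f um up CU U) (hM : ∀ x, |φ 0 x| ≤ M)
    (hL₁ : ∀ z ∈ Icc (um - M) (up + M), |deriv f z| ≤ L₁)
    (hL₂ : ∀ z ∈ Icc (um - M) (up + M), |deriv (deriv f) z| ≤ L₂) :
    PerturbedRarefaction σ f um up CU c₂ L₁ L₂ T U φ := by
  have hM0 : 0 ≤ M := (abs_nonneg _).trans (hM 0)
  have hrange (t : ℝ) (ht : t ∈ Icc 0 T) (x : ℝ) :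
      uIcc (U t x) (U t x + φ t x) ⊆ Icc (um - M) (up + M) :=
    uIcc_subset_Icc
      (Icc_subset_Icc (by linarith) (by linarith) (hU.mem_Icc ht.1 x))
      (hφ.add_mem_Icc hσ hf hU hσ' hM ht x)
  exact ⟨hσ, hf, hσ', hconv, hU, hφ, fun t ht x z hz => hL₁ z (hrange t ht x hz),
    fun t ht x z hz => hL₂ z (hrange t ht x hz)⟩

lemma PerturbedRarefaction.weightedPerturbation
    (S : PerturbedRarefaction σ f um up CU c₂ L₁ L₂ T U φ) (hp : p ∈ Icc 0 1) (hc₁ : 0 < c₁)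
    (hσ : ∀ v, c₁ * weight p v ≤ deriv σ v) (hT : 0 ≤ T)
    (hN : ∀ t ∈ Icc 0 T, ∀ x, (1 + ∂ₓ φ t x ^ 2) ^ ((1 : ℝ) / 2) ≤ N) :
    WeightedPerturbation σ f um up CU c₂ L₁ L₂ p (c₁ * (2 + 2 * CU ^ 2) ^ ((p - 1) / 2))
      (N ^ (1 - p)) T U φ := by
  have hN1 : 1 ≤ N := (Real.one_le_rpow (le_add_of_nonneg_right (sq_nonneg _)) (by norm_num)).trans
    (hN 0 ⟨le_rfl, hT⟩ 0)
  refine ⟨S, hp, by positivity, Real.one_le_rpow hN1 (by linarith [hp.2]), fun t ht x z hz => ?_,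
    fun t ht x => sq_le_rpow_mul_weight hp.2 (hN t ht x)⟩
  rw [mul_assoc]
  exact (mul_le_mul_of_nonneg_left (mul_weight_le hp.2 ⟨(S.rarefaction.spaceDeriv_pos t ht.1 x).le,
    S.rarefaction.spaceDeriv_le_const ht.1 x⟩ hz) hc₁.le).trans (hσ z)

lemma add_le_mul_of_weighted_add_le {κ X Y K : ℝ} (hκ : 0 < κ) (hX : 0 ≤ X) (hY : 0 ≤ Y)
    (h : κ / 2 * X + κ ^ 2 / 8 * Y ≤ K) : X + Y ≤ (2 / κ + 8 / κ ^ 2) * K := by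
  have hXK : X ≤ 2 / κ * K := by
    rw [div_mul_eq_mul_div, le_div_iff₀ hκ]
    nlinarith [mul_nonneg (sq_nonneg κ) hY]
  have hYK : Y ≤ 8 / κ ^ 2 * K := by
    rw [div_mul_eq_mul_div, le_div_iff₀ (by positivity)]
    nlinarith [mul_nonneg hκ.le hX]
  linarith

theorem first_derivative_energy_estimate_general
    (p c₁ c₂ : ℝ) (hp : p ∈ Icc 0 1) (hc₁ : 0 < c₁) (hc₁₂ : c₁ ≤ c₂)
    {f : ℝ → ℝ} (hf : IsSmooth f) (hconv : ∀ u, 0 ≤ deriv (deriv f) u)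
    (um up : ℝ) {CU : ℝ} (hCU : 0 < CU) (M : ℝ) :
    ∃ C₀ : ℝ, 0 < C₀ ∧ ∀ σ : ℝ → ℝ, IsSmooth σ →
      (∀ v, c₁ * weight p v ≤ deriv σ v ∧ deriv σ v ≤ c₂ * weight p v) →
      ∀ U, IsSmoothRarefaction f um up CU U → ∀ T φ, IsPerturbation σ f U T φ →
      L2norm (φ 0) + L2norm (∂ₓ φ 0) + (⨆ x, |φ 0 x|) ≤ M →
      ∀ N : ℝ, (∀ t ∈ Icc 0 T, ∀ x, (1 + ∂ₓ φ t x ^ 2) ^ ((1 : ℝ) / 2) ≤ N) →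
      ∀ t ∈ Icc 0 T,
        (∫ x, weight p (∂ₓ φ t x) * ∂ₓ φ t x ^ 2)
          + (∫ τ in (0 : ℝ)..t, ∫ x, (1 + ∂ₓ φ τ x ^ 2) ^ (p - 1) * ∂ₓ (∂ₓ φ) τ x ^ 2)
        ≤ C₀ * N ^ (1 - p) := by
  have hc₂ : 0 < c₂ := hc₁.trans_le hc₁₂
  obtain ⟨L₁, hL₁⟩ := hf.deriv.exists_abs_le (um - M) (up + M)
  obtain ⟨L₂, hL₂⟩ := hf.deriv.deriv.exists_abs_le (um - M) (up + M)
  obtain ⟨κ, hκ_eq⟩ : ∃ κ, κ = c₁ * (2 + 2 * CU ^ 2) ^ ((p - 1) / 2) := ⟨_, rfl⟩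
  have hκ : 0 < κ := hκ_eq ▸ by positivity
  refine ⟨(2 / κ + 8 / κ ^ 2) * energyConstant CU c₂ L₁ L₂ κ M,
    mul_pos (by positivity) (energyConstant_pos hCU hc₂ hκ _ _ _), ?_⟩
  intro σ hσ hσ' U hU T φ hφ hdata N hN t ht
  have hT : 0 ≤ T := ht.1.trans ht.2
  obtain ⟨hφ_le, hφ₀, hφx₀⟩ := hφ.abs_le_and_integral_sq_le hT hdata
  have S := (hφ.perturbedRarefaction hσ (deriv_mem_Icc_of_weight_le hp.2 hc₁.le hc₂.le hσ') hf hconv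
    hU hφ_le hL₁ hL₂).weightedPerturbation hp hc₁ (fun v => (hσ' v).1) hT hN
  have henergy := S.energy_le ((abs_nonneg _).trans (hφ_le 0)) hφ₀ hφx₀ ht
  rw [← hκ_eq] at henergy
  simp only [mul_pow, weight_sq] at henergy
  rw [mul_assoc]
  refine add_le_mul_of_weighted_add_le hκ (integral_nonneg fun x => ?_)
    (intervalIntegral.integral_nonneg ht.1 fun s _ => integral_nonneg fun x => ?_) henergy
  · exact mul_nonneg (weight_pos p _).le (sq_nonneg _)
  · positivity

lemma IsPerturbation.of_bounds (hφ : JointlySmooth φ)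
    (heq : ∀ t ∈ Icc 0 T, ∀ x, ∂ₜ φ t x + ∂ₓ (fluxGap f U φ) t x - ∂ₓ (stressGap σ U φ) t x
      = deriv (fun y => σ (∂ₓ U t y)) x)
    (hbdd : ∃ B, ∀ t ∈ Icc 0 T, ∀ x, |φ t x| + |∂ₓ φ t x| + |∂ₓ (∂ₓ φ) t x|
      + |∂ₓ (∂ₓ (∂ₓ φ)) t x| + |∂ₜ (∂ₓ φ) t x| ≤ B)
    (hint : ∀ t ∈ Icc 0 T, Integrable (fun x => φ t x ^ 2) ∧ Integrable (fun x => ∂ₓ φ t x ^ 2) ∧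
      Integrable (fun x => ∂ₓ (∂ₓ φ) t x ^ 2) ∧ Integrable (fun x => ∂ₓ (∂ₓ (∂ₓ φ)) t x ^ 2) ∧
      Integrable (fun x => ∂ₜ (∂ₓ φ) t x ^ 2))
    (hL2 : ∃ B, ∀ t ∈ Icc 0 T, (∫ x, φ t x ^ 2) + (∫ x, ∂ₓ φ t x ^ 2)
      + (∫ x, ∂ₓ (∂ₓ φ) t x ^ 2) + (∫ x, ∂ₓ (∂ₓ (∂ₓ φ)) t x ^ 2)
      + (∫ x, ∂ₜ (∂ₓ φ) t x ^ 2) ≤ B) :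
    IsPerturbation σ f U T φ := by
  obtain ⟨B, hB⟩ := hbdd
  obtain ⟨K, hK⟩ := hL2
  have sq_int_nonneg (g : ℝ → ℝ) : 0 ≤ ∫ x, g x ^ 2 := integral_nonneg fun _ => sq_nonneg _
  have hK' (t : ℝ) (ht : t ∈ Icc 0 T) : (∫ x, φ t x ^ 2) ≤ K ∧ (∫ x, ∂ₓ φ t x ^ 2) ≤ K ∧
      (∫ x, ∂ₓ (∂ₓ φ) t x ^ 2) ≤ K ∧ (∫ x, ∂ₜ (∂ₓ φ) t x ^ 2) ≤ K := by
    have h := hK t ht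
    have h₀ := sq_int_nonneg (φ t)
    have h₁ := sq_int_nonneg (∂ₓ φ t)
    have h₂ := sq_int_nonneg (∂ₓ (∂ₓ φ) t)
    have h₃ := sq_int_nonneg (∂ₓ (∂ₓ (∂ₓ φ)) t)
    have h₄ := sq_int_nonneg (∂ₜ (∂ₓ φ) t)
    refine ⟨?_, ?_, ?_, ?_⟩ <;> linarith
  refine ⟨hφ, heq, ⟨B, fun t ht x => le_trans ?_ (hB t ht x)⟩,
    ⟨hφ.continuous, fun t ht => (hint t ht).1, K, fun t ht => (hK' t ht).1⟩,
    ⟨hφ.space.continuous, fun t ht => (hint t ht).2.1, K, fun t ht => (hK' t ht).2.1⟩,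
    ⟨hφ.space.space.continuous, fun t ht => (hint t ht).2.2.1, K, fun t ht => (hK' t ht).2.2.1⟩,
    ⟨hφ.space.time.continuous, fun t ht => (hint t ht).2.2.2.2, K, fun t ht => (hK' t ht).2.2.2⟩⟩
  linarith [abs_nonneg (∂ₓ φ t x), abs_nonneg (∂ₓ (∂ₓ φ) t x), abs_nonneg (∂ₓ (∂ₓ (∂ₓ φ)) t x),
    abs_nonneg (∂ₜ (∂ₓ φ) t x)]

end PseudoPlastic

/-- Proposition 5.1 (first-derivative energy estimate): with `N` any bound for the
weighted `L^∞` norm `sup (1+(∂ₓφ)²)^(1/2)` on `[0,T]×ℝ`, if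
`‖φ(0)‖_{L²} + ‖∂ₓφ(0)‖_{L²} + sup|φ(0)| ≤ M` then for all `t ∈ [0,T]`,
`∫ (1+(∂ₓφ(t))²)^((p-1)/2) (∂ₓφ(t))² + ∫₀^t ∫ (1+(∂ₓφ)²)^(p-1) (∂ₓ²φ)² ≤ C₀ N^(1-p)`,
with `C₀` depending only on `p, c₁, c₂, CU, um, up, f, M`. -/
theorem first_derivative_energy_estimate
    (p c₁ c₂ : ℝ) (hp0 : 0 < p) (hp1 : p < 1) (hc1 : 0 < c₁) (hc12 : c₁ ≤ c₂)
    (f : ℝ → ℝ) (hf : ContDiff ℝ (⊤ : ℕ∞) f) (hconv : ∀ u : ℝ, 0 < deriv (deriv f) u)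
    (um up CU : ℝ) (hu : um < up) (hCU : 0 < CU)
    (M : ℝ) (hM : 0 < M) :
    ∃ C₀ : ℝ, 0 < C₀ ∧
      ∀ σ : ℝ → ℝ, ContDiff ℝ (⊤ : ℕ∞) σ → σ 0 = 0 →
      (∀ v : ℝ, c₁ * (1 + v ^ 2) ^ ((p - 1) / 2) ≤ deriv σ v ∧
        deriv σ v ≤ c₂ * (1 + v ^ 2) ^ ((p - 1) / 2)) →
      ∀ U : ℝ → ℝ → ℝ, ContDiff ℝ (⊤ : ℕ∞) (fun q : ℝ × ℝ => U q.1 q.2) →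
      (∀ t : ℝ, 0 ≤ t → ∀ x : ℝ,
        deriv (fun s => U s x) t + deriv (fun y => f (U t y)) x = 0) →
      (∀ t : ℝ, 0 ≤ t → ∀ x : ℝ, um < U t x ∧ U t x < up) →
      (∀ t : ℝ, 0 ≤ t → ∀ x : ℝ, 0 < deriv (U t) x) →
      (∀ t : ℝ, 0 ≤ t → ∀ x : ℝ, deriv (U t) x ≤ CU * (1 + t)⁻¹) →
      (∀ t : ℝ, 0 ≤ t → L2norm (deriv (U t)) ≤ CU * (1 + t) ^ (-(1 : ℝ) / 2)) →
      (∀ t : ℝ, 0 ≤ t → (∫ x : ℝ, |deriv (deriv (U t)) x|) ≤ CU * (1 + t)⁻¹) →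
      (∀ t : ℝ, 0 ≤ t → ∀ x : ℝ,
        L2norm (deriv (deriv (U t))) + |deriv (deriv (U t)) x|
          ≤ CU * (1 + t) ^ (-(9 : ℝ) / 8)) →
      (∀ t : ℝ, 0 ≤ t →
        L2norm (deriv (deriv (deriv (U t)))) ≤ CU * (1 + t) ^ (-(9 : ℝ) / 8)) →
      (∀ t : ℝ, 0 ≤ t → ∀ x : ℝ,
        L2norm (fun y => deriv (fun s => deriv (U s) y) t)
          + |deriv (fun s => deriv (U s) x) t| ≤ CU * (1 + t)⁻¹) →
      ∀ T : ℝ, 0 < T →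
      ∀ φ : ℝ → ℝ → ℝ, ContDiff ℝ (⊤ : ℕ∞) (fun q : ℝ × ℝ => φ q.1 q.2) →
      (∀ t ∈ Icc (0 : ℝ) T, ∀ x : ℝ,
        deriv (fun s => φ s x) t
          + deriv (fun y => f (U t y + φ t y) - f (U t y)) x
          - deriv (fun y => σ (deriv (U t) y + deriv (φ t) y) - σ (deriv (U t) y)) x
        = deriv (fun y => σ (deriv (U t) y)) x) →
      (∃ B : ℝ, ∀ t ∈ Icc (0 : ℝ) T, ∀ x : ℝ,
        |φ t x| + |deriv (φ t) x| + |deriv (deriv (φ t)) x|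
          + |deriv (deriv (deriv (φ t))) x| + |deriv (fun s => deriv (φ s) x) t| ≤ B) →
      (∀ t ∈ Icc (0 : ℝ) T,
        Integrable (fun x : ℝ => (φ t x) ^ 2) ∧
        Integrable (fun x : ℝ => (deriv (φ t) x) ^ 2) ∧
        Integrable (fun x : ℝ => (deriv (deriv (φ t)) x) ^ 2) ∧
        Integrable (fun x : ℝ => (deriv (deriv (deriv (φ t))) x) ^ 2) ∧
        Integrable (fun x : ℝ => (deriv (fun s => deriv (φ s) x) t) ^ 2)) →
      (∃ B : ℝ, ∀ t ∈ Icc (0 : ℝ) T,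
        (∫ x : ℝ, (φ t x) ^ 2) + (∫ x : ℝ, (deriv (φ t) x) ^ 2)
          + (∫ x : ℝ, (deriv (deriv (φ t)) x) ^ 2)
          + (∫ x : ℝ, (deriv (deriv (deriv (φ t))) x) ^ 2)
          + (∫ x : ℝ, (deriv (fun s => deriv (φ s) x) t) ^ 2) ≤ B) →
      (∀ t ∈ Icc (0 : ℝ) T,
        Tendsto (φ t) atTop (nhds 0) ∧ Tendsto (φ t) atBot (nhds 0) ∧
        Tendsto (deriv (φ t)) atTop (nhds 0) ∧ Tendsto (deriv (φ t)) atBot (nhds 0) ∧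
        Tendsto (deriv (deriv (φ t))) atTop (nhds 0) ∧
        Tendsto (deriv (deriv (φ t))) atBot (nhds 0)) →
      L2norm (φ 0) + L2norm (deriv (φ 0)) + (⨆ x : ℝ, |φ 0 x|) ≤ M →
      ∀ N : ℝ,
      (∀ t ∈ Icc (0 : ℝ) T, ∀ x : ℝ, (1 + (deriv (φ t) x) ^ 2) ^ ((1 : ℝ) / 2) ≤ N) →
      ∀ t ∈ Icc (0 : ℝ) T,
        (∫ x : ℝ, (1 + (deriv (φ t) x) ^ 2) ^ ((p - 1) / 2) * (deriv (φ t) x) ^ 2)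
          + (∫ τ in (0:ℝ)..t, ∫ x : ℝ,
              (1 + (deriv (φ τ) x) ^ 2) ^ (p - 1) * (deriv (deriv (φ τ)) x) ^ 2)
        ≤ C₀ * N ^ (1 - p) := by
  obtain ⟨C₀, hC₀, hestimate⟩ := first_derivative_energy_estimate_general p c₁ c₂ ⟨hp0.le, hp1.le⟩
    hc1 hc12 hf (fun u => (hconv u).le) um up hCU M
  refine ⟨C₀, hC₀, fun σ hσ _ hσ' U hU hUeq hUrange hUpos hUx _ _ hUxx _ hUtx T _ φ hφ hφeq hbdd
    hint hL2 _ => ?_⟩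
  exact hestimate σ hσ hσ' U ⟨hU, hUeq, hUrange, hUpos, hUx, hUxx, hUtx⟩ T φ
    (.of_bounds hφ hφeq hbdd hint hL2)
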